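/- arXiv:1404.4786 — 4 statements merged into one kernel-verified Lean document; each statement's English description precedes it below -/
import Mathlib

section
/- Let F be an infinite field, let n ≥ 3 be an integer, and let w₁, w₂, w₃ be nontrivial words. Then every element of SL_n(F) that is not in the center Z(SL_n(F)) is a product g₁g₂g₃ with g₁ ∈ w₁(SL_n(F)), g₂ ∈ w₂(SL_n(F)), and g₃ ∈ w₃(SL_n(F)). -/
/-- The set of `w`-values in the group `G`: the image of the word map `w : G^d → G`. -/
def wordValues {d : ℕ} (w : FreeGroup (Fin d)) (G : Type*) [Group G] : Set G :=
  Set.range fun g : Fin d → G => FreeGroup.lift g w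

/-!
Each `wᵢ` takes infinitely many traces on `SL₂(F)`, so direct sums of values in `SL₂(F)` with
coprime characteristic polynomials give values `A`, `B`, `Y` of `w₁`, `w₂`, `w₃` in `SLₙ(F)` that
are cyclic. It remains to write a noncentral `g` as a product of conjugates of three cyclic elements
of determinant `1`.

Gaussian elimination with generic pivots factors `g = L U` with `U` unipotent with a single Jordan
block and `L` with distinct eigenvalues. A rank-one modification of `U`, which costs one eigenvector
of `L`, turns `U` into a conjugate `Z` of `Y` (pole placement), so that `T = g Z⁻¹` still has
`n - 1` of the eigenvalues of `L`; the last one is then forced by `det T = 1`. On the other hand, a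
suitable conjugate `B'` of `B` lets `A B'` have any `n - 1` prescribed nonzero eigenvalues, and
again the last one is forced. Hence `T` is conjugate to `A B'`, and `g = T Z`.
-/

open Polynomial Module

/-! ### Word values -/

section WordValues

variable {d : ℕ} {w : FreeGroup (Fin d)} {G H : Type*} [Group G] [Group H]

theorem map_mem_wordValues (φ : G →* H) {g : G} (hg : g ∈ wordValues w G) :
    φ g ∈ wordValues w H := by
  obtain ⟨x, rfl⟩ := hg
  refine ⟨φ ∘ x, DFunLike.congr_fun (?_ : FreeGroup.lift (φ ∘ x) = φ.comp (FreeGroup.lift x)) w⟩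
  ext i
  simp

theorem wordValues_conj_subset (c : FreeGroup (Fin d)) :
    wordValues w G ⊆ wordValues (c * w * c⁻¹) G := by
  rintro _ ⟨x, rfl⟩
  have hconj : (MulAut.conj (FreeGroup.lift x c⁻¹)).toMonoidHom (FreeGroup.lift x (c * w * c⁻¹)) ∈
      wordValues (c * w * c⁻¹) G := map_mem_wordValues _ ⟨x, rfl⟩
  simpa [mul_assoc] using hconj

theorem prodMk_mem_wordValues {g : G} {h : H} (hg : g ∈ wordValues w G)
    (hh : h ∈ wordValues w H) : (g, h) ∈ wordValues w (G × H) := by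
  obtain ⟨x, rfl⟩ := hg
  obtain ⟨y, rfl⟩ := hh
  refine ⟨fun i => (x i, y i), DFunLike.congr_fun (?_ : FreeGroup.lift (fun i => (x i, y i)) =
    (FreeGroup.lift x).prod (FreeGroup.lift y)) w⟩
  ext i <;> simp

end WordValues

theorem exists_eq_conj_isCyclicallyReduced {α : Type*} {w : FreeGroup α} (hw : w ≠ 1) :
    ∃ (c : FreeGroup α) (L : List (α × Bool)),
      FreeGroup.IsCyclicallyReduced L ∧ L ≠ [] ∧ w = c * FreeGroup.mk L * c⁻¹ := by
  classical
  have key : w = FreeGroup.mk (FreeGroup.reduceCyclically.conjugator w.toWord) *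
      FreeGroup.mk (FreeGroup.reduceCyclically w.toWord) *
      (FreeGroup.mk (FreeGroup.reduceCyclically.conjugator w.toWord))⁻¹ := by
    rw [FreeGroup.inv_mk, FreeGroup.mul_mk, FreeGroup.mul_mk,
      FreeGroup.reduceCyclically.conj_conjugator_reduceCyclically, FreeGroup.mk_toWord]
  refine ⟨_, _, FreeGroup.reduceCyclically.isCyclicallyReduced FreeGroup.isReduced_toWord, ?_, key⟩
  intro hnil
  rw [hnil, ← FreeGroup.one_eq_mk, mul_one, mul_inv_cancel] at key
  exact hw key

/-! ### Traces of word values in `SL₂` -/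

section SLTwo

open Matrix

variable {α F : Type*} [Field F]

/-- The letter inverse to `l`, where `(i, true)` and `(i, false)` encode `xᵢ` and `xᵢ⁻¹`. -/
def letterInv (l : α × Bool) : α × Bool := (l.1, !l.2)

@[simp]
theorem letterInv_letterInv (l : α × Bool) : letterInv (letterInv l) = l := by simp [letterInv]

theorem ne_letterInv (l : α × Bool) : l ≠ letterInv l := by
  simp [letterInv, Prod.ext_iff]

/-- A vector spanning the line of slope `z l`. -/
def letterVec (z : α × Bool → F) (l : α × Bool) : Fin 2 → F := ![1, z l]

/-- The linear form with value `1` at `letterVec z l` and kernel the line of slope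
`z (letterInv l)`. -/
def letterForm (z : α × Bool → F) (l : α × Bool) : Fin 2 → F :=
  (z l - z (letterInv l))⁻¹ • ![-z (letterInv l), 1]

/-- The projection of the plane onto the line of slope `z l` along the line of slope
`z (letterInv l)`. -/
def letterProj (z : α × Bool → F) (l : α × Bool) : Matrix (Fin 2) (Fin 2) F :=
  vecMulVec (letterVec z l) (letterForm z l)

/-- The matrix over `F[X]` whose value at `a ≠ 0` is `a` times the matrix substituted for the letter
`l`, so that products of such matrices are polynomial in `a`. -/
noncomputable def letterPencil (z : α × Bool → F) (l : α × Bool) : Matrix (Fin 2) (Fin 2) F[X] :=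
  (X ^ 2 : F[X]) • (letterProj z l).map C + (letterProj z (letterInv l)).map C

theorem letterForm_dotProduct_letterVec (z : α × Bool → F) (l l' : α × Bool) :
    letterForm z l ⬝ᵥ letterVec z l' = (z l - z (letterInv l))⁻¹ * (z l' - z (letterInv l)) := by
  simp only [letterForm, letterVec, smul_cons, smul_empty, smul_eq_mul, dotProduct_cons, head_cons,
    tail_cons, dotProduct_of_isEmpty]
  ring

theorem letterProj_mul_letterInv (z : α × Bool → F) (l : α × Bool) :
    letterProj z l * letterProj z (letterInv l) = 0 := by
  rw [letterProj, letterProj, vecMulVec_mul_vecMulVec, letterForm_dotProduct_letterVec, sub_self,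
    mul_zero, zero_smul, vecMulVec_zero]

theorem coeff_trace_prod_letterPencil (z : α × Bool → F) (L : List (α × Bool)) :
    (L.map (letterPencil z)).prod.trace.coeff (L.length * 2) =
      (L.map (letterProj z)).prod.trace := by
  let P (l : α × Bool) : (Matrix (Fin 2) (Fin 2) F)[X] :=
    C (letterProj z l) * X ^ 2 + C (letterProj z (letterInv l))
  have hP (l : α × Bool) : matPolyEquiv (letterPencil z l) = P l := by
    rw [letterPencil, map_add, matPolyEquiv_map_smul, matPolyEquiv_map_C, matPolyEquiv_map_C,
      Polynomial.map_pow, map_X, X_pow_mul_C]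
  have hcoeff := coeff_list_prod_of_natDegree_le (L.map P) 2 (by
    rw [List.forall_mem_map]
    intro l _
    simp only [P]
    compute_degree)
  have hlead (l : α × Bool) : (P l).coeff 2 = letterProj z l := by simp [P]
  have hmat : matPolyEquiv (L.map (letterPencil z)).prod = (L.map P).prod := by
    rw [map_list_prod, List.map_map]
    simp only [Function.comp_def, hP]
  simp only [List.length_map, List.map_map, Function.comp_def, hlead] at hcoeff
  simp only [trace, diag_apply, finsetSum_coeff, ← matPolyEquiv_coeff_apply, hmat, hcoeff]

variable {z : α × Bool → F} (hz : Function.Injective z)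
include hz

theorem sub_letterInv_ne_zero (l : α × Bool) : z l - z (letterInv l) ≠ 0 :=
  sub_ne_zero.2 (hz.ne (ne_letterInv l))

theorem letterProj_add_letterInv (l : α × Bool) :
    letterProj z l + letterProj z (letterInv l) = 1 := by
  have h := sub_letterInv_ne_zero hz l
  have h' := sub_letterInv_ne_zero hz (letterInv l)
  rw [letterInv_letterInv] at h'
  rw [letterProj, letterProj, ← Matrix.ext_iff, Fin.forall_fin_two, Fin.forall_fin_two,
    Fin.forall_fin_two]
  simp only [letterVec, letterForm, letterInv_letterInv, Matrix.add_apply, vecMulVec_apply,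
    Pi.smul_apply, smul_eq_mul, cons_val_zero, cons_val_one, one_apply_eq, ne_eq, zero_ne_one,
    one_ne_zero, not_false_eq_true, one_apply_ne]
  grind

theorem letterProj_mul_self (l : α × Bool) : letterProj z l * letterProj z l = letterProj z l := by
  simpa only [mul_add, letterProj_mul_letterInv, add_zero, mul_one] using
    congrArg (letterProj z l * ·) (letterProj_add_letterInv hz l)

theorem det_smul_letterProj_add_smul_letterProj (l : α × Bool) (a b : F) :
    (a • letterProj z l + b • letterProj z (letterInv l)).det = a * b := by
  have h := sub_letterInv_ne_zero hz l
  have h' := sub_letterInv_ne_zero hz (letterInv l)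
  rw [letterInv_letterInv] at h'
  simp only [det_fin_two, letterProj, letterVec, letterForm, letterInv_letterInv, Matrix.add_apply,
    Matrix.smul_apply, vecMulVec_apply, Pi.smul_apply, smul_eq_mul, cons_val_zero, cons_val_one]
  grind

theorem letterForm_dotProduct_letterVec_ne_zero {l l' : α × Bool} (h : l.1 = l'.1 → l.2 = l'.2) :
    letterForm z l ⬝ᵥ letterVec z l' ≠ 0 := by
  have hne : l' ≠ letterInv l := by
    rintro rfl
    simp [letterInv] at h
  rw [letterForm_dotProduct_letterVec]
  exact mul_ne_zero (inv_ne_zero (sub_letterInv_ne_zero hz l)) (sub_ne_zero.2 (hz.ne hne))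

theorem prod_letterProj_eq_smul_vecMulVec (l : α × Bool) (L : List (α × Bool))
    (hL : FreeGroup.IsReduced (l :: L)) :
    ∃ c : F, c ≠ 0 ∧ ∃ l' ∈ (l :: L).getLast?,
      ((l :: L).map (letterProj z)).prod = c • vecMulVec (letterVec z l) (letterForm z l') := by
  induction L generalizing l with
  | nil => exact ⟨1, one_ne_zero, l, by simp, by simp [letterProj]⟩
  | cons k L ih =>
    rw [FreeGroup.isReduced_cons_cons] at hL
    obtain ⟨c, hc, l', hl', hprod⟩ := ih k hL.2
    refine ⟨_, mul_ne_zero hc (letterForm_dotProduct_letterVec_ne_zero hz hL.1), l',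
      by simpa using hl', ?_⟩
    rw [List.map_cons, List.prod_cons, hprod, letterProj, mul_smul_comm,
      vecMulVec_mul_vecMulVec, vecMulVec_smul, smul_smul]

theorem trace_prod_letterProj_ne_zero {L : List (α × Bool)}
    (hL : FreeGroup.IsCyclicallyReduced L) (hnil : L ≠ []) :
    (L.map (letterProj z)).prod.trace ≠ 0 := by
  obtain ⟨l, L, rfl⟩ := List.exists_cons_of_ne_nil hnil
  obtain ⟨c, hc, l', hl', hprod⟩ := prod_letterProj_eq_smul_vecMulVec hz l L hL.1
  rw [hprod, trace_smul, trace_vecMulVec, smul_eq_mul, dotProduct_comm]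
  exact mul_ne_zero hc (letterForm_dotProduct_letterVec_ne_zero hz (hL.2 _ hl' _ rfl))

/-- The element of `SL₂` substituted for the letter `l`: it has eigenvalues `a` and `a⁻¹` on the
lines of slope `z l` and `z (letterInv l)`. -/
def letterSL (a : Fˣ) (l : α × Bool) : SpecialLinearGroup (Fin 2) F :=
  ⟨(a : F) • letterProj z l + (a⁻¹ : F) • letterProj z (letterInv l), by
    rw [det_smul_letterProj_add_smul_letterProj hz, mul_inv_cancel₀ a.ne_zero]⟩

theorem letterSL_letterInv (a : Fˣ) (l : α × Bool) :
    letterSL hz a (letterInv l) = (letterSL hz a l)⁻¹ := by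
  rw [eq_inv_iff_mul_eq_one]
  apply Subtype.ext
  have hflip : letterProj z (letterInv l) * letterProj z l = 0 := by
    simpa using letterProj_mul_letterInv z (letterInv l)
  change ((a : F) • letterProj z (letterInv l) +
    (a⁻¹ : F) • letterProj z (letterInv (letterInv l))) *
    ((a : F) • letterProj z l + (a⁻¹ : F) • letterProj z (letterInv l)) = 1
  simp [mul_add, add_mul, letterProj_mul_self hz, letterProj_mul_letterInv, hflip,
    smul_smul, letterProj_add_letterInv hz]

theorem mapMatrix_eval_letterPencil (a : Fˣ) (l : α × Bool) :
    (evalRingHom (a : F)).mapMatrix (letterPencil z l) = (a : F) • (letterSL hz a l).1 := by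
  ext i j
  simp only [letterPencil, letterSL, coe_evalRingHom, RingHom.mapMatrix_apply, Matrix.map_apply,
    Matrix.add_apply, Matrix.smul_apply, smul_eq_mul, eval_add, eval_mul, eval_pow, eval_X, eval_C]
  field_simp

theorem eval_trace_prod_letterPencil (a : Fˣ) (L : List (α × Bool)) :
    (L.map (letterPencil z)).prod.trace.eval (a : F) = (a : F) ^ L.length *
      (FreeGroup.lift (fun i => letterSL hz a (i, true)) (FreeGroup.mk L)).1.trace := by
  have hletter : (fun x : α × Bool =>
      cond x.2 (letterSL hz a (x.1, true)) (letterSL hz a (x.1, true))⁻¹) = letterSL hz a := by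
    funext ⟨i, b⟩
    cases b
    · simp [← letterSL_letterInv, letterInv]
    · rfl
  have hprod : (L.map fun l => (a : F) • (letterSL hz a l).1).prod =
      (a : F) ^ L.length • (L.map (letterSL hz a)).prod.1 := by
    induction L with
    | nil => simp
    | cons l L ih =>
      rw [List.map_cons, List.prod_cons, ih, List.map_cons, List.prod_cons, List.length_cons,
        pow_succ', smul_mul_smul_comm]
      rfl
  rw [FreeGroup.lift_mk, hletter, ← smul_eq_mul, ← trace_smul, ← hprod, ← coe_evalRingHom,
    AddMonoidHom.map_trace (evalRingHom (a : F)), ← RingHom.mapMatrix_apply, map_list_prod,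
    List.map_map]
  simp only [Function.comp_def, mapMatrix_eval_letterPencil hz]

end SLTwo

/-- Writing `w` as a conjugate of a cyclically reduced word `L`, the trace of its value at the
matrices `letterSL a` is a Laurent polynomial in `a` with leading term of positive degree. -/
theorem exists_mem_wordValues_trace_notMem {F : Type*} [Field F] [Infinite F] {d : ℕ}
    {w : FreeGroup (Fin d)} (hw : w ≠ 1) {S : Set F} (hS : S.Finite) :
    ∃ W ∈ wordValues w (Matrix.SpecialLinearGroup (Fin 2) F), W.1.trace ∉ S := by
  obtain ⟨c, L, hL, hnil, rfl⟩ := exists_eq_conj_isCyclicallyReduced hw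
  obtain ⟨z, hz⟩ := (Encodable.encode' (Fin d × Bool)).trans (Infinite.natEmbedding F)
  let q (s : F) : F[X] := (L.map (letterPencil z)).prod.trace - C s * X ^ L.length
  have hq (s : F) : q s ≠ 0 := by
    intro h
    have hcoeff := congrArg (coeff · (L.length * 2)) h
    have hlen : L.length * 2 ≠ L.length := by
      have := List.length_pos_of_ne_nil hnil
      lia
    simp only [q, coeff_sub, coeff_trace_prod_letterPencil, coeff_C_mul, coeff_X_pow, hlen,
      if_false, mul_zero, sub_zero, coeff_zero] at hcoeff
    exact trace_prod_letterProj_ne_zero hz hL hnil hcoeff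
  obtain ⟨a, ha⟩ := exists_eval_ne_zero_of_natDegree_lt_card (X * ∏ s ∈ hS.toFinset, q s)
    (mul_ne_zero X_ne_zero (Finset.prod_ne_zero_iff.2 fun s _ => hq s))
    (Cardinal.natCast_lt_aleph0.trans_le (Cardinal.aleph0_le_mk F))
  rw [eval_mul, eval_X, eval_prod, mul_ne_zero_iff, Finset.prod_ne_zero_iff] at ha
  lift a to Fˣ using ha.1.isUnit
  refine ⟨_, wordValues_conj_subset c ⟨fun i => letterSL hz a (i, true), rfl⟩, fun hmem => ?_⟩
  apply ha.2 _ (hS.mem_toFinset.2 hmem)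
  simp only [q, eval_sub, eval_mul, eval_C, eval_pow, eval_X, eval_trace_prod_letterPencil hz]
  ring

/-! ### Cyclic endomorphisms -/

section Cyclic

variable {F V V' : Type*} [Field F] [AddCommGroup V] [Module F V] [AddCommGroup V'] [Module F V']

/-- The endomorphism `f` is cyclic: it makes `V` a cyclic `F[X]`-module. -/
def IsCyclicEnd (f : End F V) : Prop :=
  ∃ v, ∀ x, ∃ p : F[X], aeval f p v = x

theorem aeval_apply_mem_span_range_pow [FiniteDimensional F V] (f : End F V) (v : V) (p : F[X]) :
    aeval f p v ∈ Submodule.span F (Set.range fun i : Fin (finrank F V) => (f ^ (i : ℕ)) v) := by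
  rw [← aeval_modByMonic_eq_self_of_root (f.aeval_self_charpoly), aeval_def, eval₂_eq_sum, sum_def,
    LinearMap.sum_apply]
  refine Submodule.sum_mem _ fun i hi => Submodule.smul_mem _ _ (Submodule.subset_span ?_)
  have hdeg : i < finrank F V := by
    rw [← f.charpoly_natDegree]
    exact_mod_cast (le_degree_of_mem_supp i hi).trans_lt
      ((degree_modByMonic_lt p f.charpoly_monic).trans_le degree_le_natDegree)
  exact ⟨⟨i, hdeg⟩, rfl⟩

theorem IsCyclicEnd.exists_basis [FiniteDimensional F V] {f : End F V} (hf : IsCyclicEnd f) :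
    ∃ (v : V) (b : Basis (Fin (finrank F V)) F V), ∀ i, b i = (f ^ (i : ℕ)) v := by
  obtain ⟨v, hv⟩ := hf
  have hspan : ⊤ ≤ Submodule.span F (Set.range fun i : Fin (finrank F V) => (f ^ (i : ℕ)) v) := by
    intro x _
    obtain ⟨p, rfl⟩ := hv x
    exact aeval_apply_mem_span_range_pow f v p
  exact ⟨v, basisOfTopLeSpanOfCardEqFinrank _ hspan (Fintype.card_fin _), by simp⟩

theorem IsCyclicEnd.conj {f : End F V} (hf : IsCyclicEnd f) (e : V ≃ₗ[F] V') :
    IsCyclicEnd (e.conj f) := by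
  obtain ⟨v, hv⟩ := hf
  refine ⟨e v, fun x => ?_⟩
  obtain ⟨p, hp⟩ := hv (e.symm x)
  have haeval : aeval (e.conj f) p = e.conj (aeval f p) :=
    aeval_algHom_apply (e.conjAlgEquiv F).toAlgHom f p
  exact ⟨p, by rw [haeval, LinearEquiv.conj_apply_apply, e.symm_apply_apply, hp,
    e.apply_symm_apply]⟩

theorem aeval_prodMap (f : End F V) (g : End F V') (p : F[X]) :
    aeval (f.prodMap g) p = (aeval f p).prodMap (aeval g p) := by
  have h := aeval_algHom_apply (LinearMap.prodMapAlgHom F V V') (f, g) p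
  rwa [aeval_prod_apply] at h

/-- If `a * χ_f + b * χ_g = 1`, then `b * χ_g` acts as `(1, 0)` and `a * χ_f` as `(0, 1)`. -/
theorem IsCyclicEnd.prodMap [FiniteDimensional F V] [FiniteDimensional F V'] {f : End F V}
    {g : End F V'} (hf : IsCyclicEnd f) (hg : IsCyclicEnd g)
    (h : IsCoprime f.charpoly g.charpoly) : IsCyclicEnd (f.prodMap g) := by
  obtain ⟨v, hv⟩ := hf
  obtain ⟨u, hu⟩ := hg
  obtain ⟨a, b, hab⟩ := h
  refine ⟨(v, u), fun x => ?_⟩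
  obtain ⟨p, hp⟩ := hv x.1
  obtain ⟨q, hq⟩ := hu x.2
  refine ⟨p * (b * g.charpoly) + q * (a * f.charpoly), ?_⟩
  have hf' : aeval f (p * (b * g.charpoly) + q * (a * f.charpoly)) = aeval f p := by
    rw [eq_sub_of_add_eq' hab]
    simp [LinearMap.aeval_self_charpoly]
  have hg' : aeval g (p * (b * g.charpoly) + q * (a * f.charpoly)) = aeval g q := by
    rw [eq_sub_of_add_eq hab]
    simp [LinearMap.aeval_self_charpoly]
  rw [aeval_prodMap, LinearMap.prodMap_apply, hf', hg', hp, hq]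

theorem isCyclicEnd_of_finrank_le_one [FiniteDimensional F V] (hV : finrank F V ≤ 1) (f : End F V) :
    IsCyclicEnd f := by
  obtain ⟨v, hv⟩ := finrank_le_one_iff.1 hV
  refine ⟨v, fun x => ?_⟩
  obtain ⟨c, hc⟩ := hv x
  exact ⟨C c, by simpa⟩

theorem isCyclicEnd_of_finrank_eq_two [FiniteDimensional F V] (hV : finrank F V = 2) {f : End F V}
    (hf : ∀ c : F, f ≠ c • 1) : IsCyclicEnd f := by
  obtain ⟨v, hv⟩ : ∃ v, LinearIndependent F ![v, f v] := by
    by_contra! h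
    obtain ⟨c, hc⟩ := LinearMap.exists_eq_smul_id_of_forall_notLinearIndependent h
    exact hf c hc
  have hspan := hv.span_eq_top_of_card_eq_finrank' (by simp [hV])
  refine ⟨v, fun x => ?_⟩
  obtain ⟨a, b, hx⟩ : ∃ a b : F, a • v + b • f v = x := by
    rw [← Submodule.mem_span_pair, ← Matrix.range_cons_cons_empty, hspan]
    trivial
  exact ⟨C a + C b * X, by simpa⟩

end Cyclic

/-! ### Cyclic word values -/

section CyclicWordValues

variable {F : Type*} [Field F]

theorem finite_setOf_not_isCoprime {p : F[X]} (hp : p ≠ 0) :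
    {t : F | ¬ IsCoprime (X ^ 2 - C t * X + 1) p}.Finite := by
  let K := AlgebraicClosure F
  refine (((p.rootSet K).toFinite.image fun r => r + r⁻¹).preimage
    (algebraMap F K).injective.injOn).subset fun t ht => ?_
  rw [Set.mem_ofPred_eq, isCoprime_iff_aeval_ne_zero_of_isAlgClosed _ K] at ht
  push Not at ht
  obtain ⟨r, hr, hpr⟩ := ht
  simp only [map_add, map_sub, map_pow, map_mul, aeval_X, aeval_C, map_one] at hr
  have hr₀ : r ≠ 0 := by
    rintro rfl
    simp at hr
  refine ⟨r, (mem_rootSet_of_ne hp).2 hpr, ?_⟩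
  change r + r⁻¹ = algebraMap F K t
  refine mul_right_cancel₀ hr₀ ?_
  rw [add_mul, inv_mul_cancel₀ hr₀]
  linear_combination hr

variable {d : ℕ} {w : FreeGroup (Fin d)} {V V' : Type*} [AddCommGroup V] [Module F V]
  [FiniteDimensional F V] [AddCommGroup V'] [Module F V'] [FiniteDimensional F V']

/-- Some value of `w` in `SL(V)` is cyclic with characteristic polynomial coprime to `p`. The
polynomial `p` allows such values to be combined in direct sums. -/
def HasCyclicValue (w : FreeGroup (Fin d)) (V : Type*) [AddCommGroup V] [Module F V]
    [FiniteDimensional F V] (p : F[X]) : Prop :=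
  ∃ W ∈ wordValues w (SpecialLinearGroup F V),
    IsCyclicEnd (W : End F V) ∧ IsCoprime (W : End F V).charpoly p

theorem HasCyclicValue.congr {p : F[X]} (h : HasCyclicValue w V p) (e : V ≃ₗ[F] V') :
    HasCyclicValue w V' p := by
  obtain ⟨W, hW, hcyc, hcop⟩ := h
  refine ⟨SpecialLinearGroup.congr_linearEquiv e W,
    map_mem_wordValues (SpecialLinearGroup.congr_linearEquiv e).toMonoidHom hW, hcyc.conj e, ?_⟩
  rwa [← LinearEquiv.charpoly_conj e] at hcop

/-- The action of a pair of special linear maps on the product. -/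
def slProd (F V V' : Type*) [Field F] [AddCommGroup V] [Module F V] [AddCommGroup V'] [Module F V']
    [FiniteDimensional F V] [FiniteDimensional F V'] :
    SpecialLinearGroup F V × SpecialLinearGroup F V' →* SpecialLinearGroup F (V × V') where
  toFun g := ⟨g.1.1.prodCongr g.2.1, by
    apply Units.ext
    rw [LinearEquiv.coe_det, LinearEquiv.coe_prodCongr, LinearMap.det_prodMap,
      SpecialLinearGroup.det_eq_one, SpecialLinearGroup.det_eq_one, mul_one, Units.val_one]⟩
  map_one' := rfl
  map_mul' _ _ := rfl

theorem coe_slProd (g : SpecialLinearGroup F V × SpecialLinearGroup F V') :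
    (slProd F V V' g : End F (V × V')) = (g.1 : End F V).prodMap (g.2 : End F V') := rfl

theorem HasCyclicValue.prod {p : F[X]} {W : SpecialLinearGroup F V'}
    (hW : W ∈ wordValues w (SpecialLinearGroup F V')) (hcyc : IsCyclicEnd (W : End F V'))
    (hcop : IsCoprime (W : End F V').charpoly p)
    (h : HasCyclicValue w V (p * (W : End F V').charpoly)) : HasCyclicValue w (V × V') p := by
  obtain ⟨U, hU, hUcyc, hUcop⟩ := h
  rw [IsCoprime.mul_right_iff] at hUcop
  refine ⟨slProd F V V' (U, W), map_mem_wordValues _ (prodMk_mem_wordValues hU hW), ?_, ?_⟩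
  · exact hUcyc.prodMap hcyc hUcop.2
  · rw [coe_slProd, LinearMap.charpoly_prodMap]
    exact hUcop.1.mul_left hcop

theorem hasCyclicValue_of_finrank_le_one (w : FreeGroup (Fin d)) (hV : finrank F V ≤ 1) {p : F[X]}
    (hp : IsCoprime (X - 1) p) : HasCyclicValue w V p := by
  refine ⟨1, ?_, isCyclicEnd_of_finrank_le_one hV _, ?_⟩
  · simpa using map_mem_wordValues (1 : SpecialLinearGroup F V →* _) (Set.mem_range_self 1)
  · change IsCoprime (LinearMap.charpoly 1) p
    rw [LinearMap.charpoly_one]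
    exact hp.pow_left

variable [Infinite F]

theorem hasCyclicValue_fin_two (hw : w ≠ 1) {p : F[X]} (hp : p ≠ 0) :
    HasCyclicValue w (Fin 2 → F) p := by
  obtain ⟨W, hW, htr⟩ := exists_mem_wordValues_trace_notMem hw
    ((finite_setOf_not_isCoprime hp).union (Set.toFinite {2, -2}))
  simp only [Set.mem_union, Set.mem_ofPred_eq, not_or, not_not, Set.mem_insert_iff,
    Set.mem_singleton_iff] at htr
  have hcoe : (Matrix.SpecialLinearGroup.toLin'_equiv W : End F (Fin 2 → F)) =
    Matrix.toLin' W.1 := rfl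
  refine ⟨Matrix.SpecialLinearGroup.toLin'_equiv W,
    map_mem_wordValues Matrix.SpecialLinearGroup.toLin'_equiv.toMonoidHom hW, ?_, ?_⟩
  · refine isCyclicEnd_of_finrank_eq_two (by simp) fun c hc => ?_
    have hWc : W.1 = c • 1 := by
      apply Matrix.toLin'.injective
      rw [← hcoe, hc, map_smul, Matrix.toLin'_one]
      rfl
    have htrace : W.1.trace = 2 * c := by simp [hWc, mul_comm]
    have hdet : c ^ 2 = 1 := by simpa [hWc] using W.det_coe
    rcases sq_eq_one_iff.1 hdet with rfl | rfl <;> simp [htrace] at htr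
  · rw [hcoe, Matrix.charpoly_toLin', Matrix.charpoly_fin_two, W.det_coe, map_one]
    exact htr.1

theorem hasCyclicValue (hw : w ≠ 1) (V : Type*) [AddCommGroup V] [Module F V]
    [FiniteDimensional F V] {p : F[X]} (hp : IsCoprime (X - 1) p) : HasCyclicValue w V p := by
  suffices key : ∀ (n : ℕ) {p : F[X]}, IsCoprime (X - 1) p → HasCyclicValue w (Fin n → F) p from
    (key _ hp).congr (finBasis F V).equivFun.symm
  have hX : ¬ IsUnit (X - 1 : F[X]) := not_isUnit_X_sub_C 1
  intro n
  induction n using Nat.twoStepInduction with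
  | zero => exact hasCyclicValue_of_finrank_le_one w (by simp)
  | one => exact hasCyclicValue_of_finrank_le_one w (by simp)
  | more n ih _ =>
    intro p hp
    have hp₀ : p ≠ 0 := by
      rintro rfl
      exact hX (isCoprime_zero_right.1 hp)
    have hX₀ : (X - 1 : F[X]) ≠ 0 := X_sub_C_ne_zero 1
    obtain ⟨W, hW, hcyc, hcop⟩ := hasCyclicValue_fin_two hw (mul_ne_zero hp₀ hX₀)
    rw [IsCoprime.mul_right_iff] at hcop
    exact (HasCyclicValue.prod hW hcyc hcop.1 (ih (hp.mul_right hcop.2.symm))).congr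
      (LinearEquiv.ofFinrankEq ((Fin n → F) × (Fin 2 → F)) (Fin (n + 2) → F) (by simp))

end CyclicWordValues

/-! ### Schur complements of rank one -/

section SchurComplement

variable {F V : Type*} [Field F] [AddCommGroup V] [Module F V]

theorem exists_dual_apply_eq {ι : Type*} {b : ι → V} (hb : LinearIndependent F b) (c : ι → F) :
    ∃ α : Dual F V, ∀ i, α (b i) = c i := by
  obtain ⟨g, hg⟩ := LinearMap.exists_leftInverse_of_injective (Finsupp.linearCombination F b)
    (LinearMap.ker_eq_bot.2 hb)
  refine ⟨Finsupp.linearCombination F c ∘ₗ g, fun i => ?_⟩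
  have hi := LinearMap.congr_fun hg (Finsupp.single i 1)
  simp only [LinearMap.comp_apply, Finsupp.linearCombination_single, one_smul,
    LinearMap.id_apply] at hi
  rw [LinearMap.comp_apply, hi, Finsupp.linearCombination_single, one_smul]

theorem exists_smul_eq_apply_of_add_smul [Infinite F] {A : End F V} {β : Dual F V} {u v : V}
    (hu : β u ≠ 0) (hv : β v = 0) (h : ∀ t : F, ∃ c : F, c • (u + t • v) = A (u + t • v)) :
    ∃ c : F, c • v = A v := by
  rcases eq_or_ne v 0 with rfl | hv₀
  · exact ⟨0, by simp⟩
  choose c hc using h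
  obtain ⟨t, ht⟩ := (Set.toFinite ({0, 1} : Set F)).exists_notMem
  simp only [Set.mem_insert_iff, Set.mem_singleton_iff, not_or] at ht
  have hrel (s : F) : s • A v = (c s - c 0) • u + (s * c s) • v := by
    have h₀ := hc 0
    have hs := hc s
    simp only [map_add, map_smul, zero_smul, add_zero] at h₀ hs
    rw [← h₀] at hs
    linear_combination (norm := module) -hs
  have hβ (s : F) : s * β (A v) = (c s - c 0) * β u := by
    simpa [hv] using congrArg β (hrel s)
  have hct : c t - c 0 = t * (c 1 - c 0) :=
    mul_right_cancel₀ hu (by rw [← hβ t, mul_assoc, ← hβ 1, one_mul])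
  have hv₁ : (t * (c t - c 1)) • v = 0 := by
    linear_combination (norm := module) t • hrel 1 - hrel t - hct • u
  have hc₁ : c t = c 1 := by
    simpa [hv₀, ht.1, sub_eq_zero] using hv₁
  have hc₀ : c 1 = c 0 := by
    have h₀ : (t - 1) * (c 1 - c 0) = 0 := by linear_combination hc₁ - hct
    simpa [sub_eq_zero, ht.2] using h₀
  exact ⟨c 1, by simpa [hc₀] using (hrel 1).symm⟩

theorem exists_apply_ne_zero_and_linearIndependent [Infinite F] {A : End F V}
    (hA : ∀ c : F, A ≠ c • 1) {β : Dual F V} (hβ : β ≠ 0) :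
    ∃ v, β v ≠ 0 ∧ LinearIndependent F ![v, A v] := by
  obtain ⟨v, hv⟩ : ∃ v, LinearIndependent F ![v, A v] := by
    by_contra! h
    obtain ⟨c, hc⟩ := LinearMap.exists_eq_smul_id_of_forall_notLinearIndependent h
    exact hA c hc
  by_contra! h
  have hβv : β v = 0 := by
    by_contra hβv
    exact h v hβv hv
  obtain ⟨u, hu⟩ : ∃ u, β u ≠ 0 := by
    by_contra! hβ₀
    exact hβ (LinearMap.ext hβ₀)
  obtain ⟨c, hc⟩ := exists_smul_eq_apply_of_add_smul hu hβv fun t => by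
    have hβt : β (u + t • v) ≠ 0 := by simpa [hβv]
    have ht₀ : u + t • v ≠ 0 := by
      intro ht
      simp [ht] at hβt
    simpa [LinearIndependent.pair_iff' ht₀] using h _ hβt
  exact (LinearIndependent.pair_iff' (hv.ne_zero 0)).1 hv c hc

/-- The Schur complement of the entry `α (A v)`, as an endomorphism of `ker α`: the block left
after clearing this pivot by Gaussian elimination, when `V = F v ⊕ ker α`. -/
def schurComplement (A : End F V) (α : Dual F V) (v : V) (h : α (A v) ≠ 0) :
    End F (LinearMap.ker α) :=
  (A - ((α (A v))⁻¹ • α ∘ₗ A).smulRight (A v)).restrict fun x _ =>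
    LinearMap.mem_ker.2 (by simp [mul_right_comm _ (α (A x)), h])

variable {A : End F V} {α : Dual F V} {v : V}

theorem coe_schurComplement_apply (h : α (A v) ≠ 0) (x : LinearMap.ker α) :
    (schurComplement A α v h x : V) = A x - (α (A x) / α (A v)) • A v := by
  rw [schurComplement, LinearMap.coe_restrict_apply]
  simp [div_eq_inv_mul]

/-- Composing `A` with a transvection makes `ker α` invariant, with `A` acting on it by the Schur
complement and on the quotient by the scalar `α (A v)`. -/
theorem det_eq_mul_det_schurComplement [FiniteDimensional F V] (hv : α v = 1)
    (h : α (A v) ≠ 0) : A.det = α (A v) * (schurComplement A α v h).det := by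
  set f : Dual F V := α - (α (A v))⁻¹ • α ∘ₗ A
  set B : End F V := A ∘ₗ LinearMap.transvection f v
  have hf : f v = 0 := by simp [f, hv, h]
  have hB (x : V) : B x = A x + (α x - α (A x) / α (A v)) • A v := by
    simp [B, f, LinearMap.transvection.apply, div_eq_inv_mul]
  have hαB (x : V) : α (B x) = α (A v) * α x := by
    rw [hB, map_add, map_smul, smul_eq_mul]
    field_simp
    ring
  have hdet : A.det = B.det := by
    rw [LinearMap.det_comp, LinearMap.transvection.det, hf, add_zero, mul_one]
  have hker : LinearMap.ker α ≤ (LinearMap.ker α).comap B := fun x hx => by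
    rw [Submodule.mem_comap, LinearMap.mem_ker, hαB, LinearMap.mem_ker.1 hx, mul_zero]
  have hrestrict : B.restrict hker = schurComplement A α v h := by
    ext x
    rw [LinearMap.coe_restrict_apply, hB, coe_schurComplement_apply, LinearMap.mem_ker.1 x.2,
      zero_sub, neg_smul, sub_eq_add_neg]
  have hquot : (LinearMap.ker α).mapQ _ B hker = α (A v) • LinearMap.id := by
    refine Submodule.linearMap_qext _ (LinearMap.ext fun x => ?_)
    rw [LinearMap.comp_apply, LinearMap.comp_apply, Submodule.mkQ_apply, Submodule.mapQ_apply,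
      LinearMap.smul_apply, LinearMap.id_apply, ← Submodule.Quotient.mk_smul,
      Submodule.Quotient.eq, LinearMap.mem_ker, map_sub, hαB, map_smul, smul_eq_mul, sub_self]
  have hα : α ≠ 0 := by
    rintro rfl
    simp at hv
  have hrank : finrank F (V ⧸ LinearMap.ker α) = 1 := by
    rw [(α.quotKerEquivOfSurjective (LinearMap.surjective hα)).finrank_eq, finrank_self]
  rw [hdet, LinearMap.det_eq_det_mul_det _ B hker, hrestrict, hquot, LinearMap.det_smul, hrank,
    pow_one, LinearMap.det_id, mul_one, mul_comm]

theorem exists_apply_eq_of_schurComplement_eq_smul (hv : α v = 1) (h : α (A v) ≠ 0) {c : F}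
    (hc : schurComplement A α v h = c • 1) (x : V) :
    ∃ k : F, A x = c • x - (c * α x) • v + k • A v := by
  have hx : x - α x • v ∈ LinearMap.ker α := by simp [hv]
  have hS := congrArg Subtype.val (LinearMap.congr_fun hc ⟨_, hx⟩)
  rw [coe_schurComplement_apply] at hS
  simp only [map_sub, map_smul, LinearMap.smul_apply, Module.End.one_apply, Submodule.coe_smul]
    at hS
  exact ⟨α x + (α (A x) - α x • α (A v)) / α (A v), by linear_combination (norm := module) hS⟩

theorem exists_dual_schurComplement_ne_smul [FiniteDimensional F V] (hV : 3 ≤ finrank F V)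
    (hA : Function.Injective A) (hli : LinearIndependent F ![v, A v]) {m : F} (hm : m ≠ 0) :
    ∃ α : Dual F V, α v = 1 ∧ α (A v) = m ∧
      ∀ (h : α (A v) ≠ 0) (c : F), schurComplement A α v h ≠ c • 1 := by
  obtain ⟨α, hα⟩ := exists_dual_apply_eq hli ![1, m]
  have hα₀ : α v = 1 := hα 0
  have hα₁ : α (A v) = m := hα 1
  obtain ⟨γ, hγ, hspan⟩ := Submodule.exists_le_ker_of_lt_top
    (Submodule.span F (Set.range ![v, A v])) (lt_top_iff_ne_top.2 fun htop => by
      have hle := finrank_range_le_card (R := F) ![v, A v]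
      rw [Set.finrank, htop, finrank_top, Fintype.card_fin] at hle
      lia)
  have hγ₀ : γ v = 0 := hspan (Submodule.subset_span ⟨0, rfl⟩)
  have hγ₁ : γ (A v) = 0 := hspan (Submodule.subset_span ⟨1, rfl⟩)
  by_contra! hcon
  obtain ⟨h, c, hc⟩ := hcon α hα₀ hα₁
  obtain ⟨h', c', hc'⟩ := hcon (α + γ) (by simp [hα₀, hγ₀]) (by simp [hα₁, hγ₁])
  have hAx := exists_apply_eq_of_schurComplement_eq_smul hα₀ h hc
  have hAx' := exists_apply_eq_of_schurComplement_eq_smul (by simp [hα₀, hγ₀]) h' hc'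
  rw [LinearIndependent.pair_iff] at hli
  have hcc : c = c' := by
    obtain ⟨k, hk⟩ := hAx (A v)
    obtain ⟨k', hk'⟩ := hAx' (A v)
    simp only [LinearMap.add_apply, hα₁, hγ₁, add_zero] at hk hk'
    have hcm := (hli ((c' - c) * m) (c - c' + k - k')
      (by linear_combination (norm := module) hk' - hk)).1
    exact (sub_eq_zero.1 ((mul_eq_zero.1 hcm).resolve_right hm)).symm
  have hc₀ : c = 0 := by
    obtain ⟨x, hx⟩ : ∃ x, γ x ≠ 0 := by
      by_contra! hγx
      exact hγ (LinearMap.ext hγx)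
    obtain ⟨k, hk⟩ := hAx x
    obtain ⟨k', hk'⟩ := hAx' x
    rw [LinearMap.add_apply, ← hcc] at hk'
    have hcx := (hli (c * γ x) (k - k') (by linear_combination (norm := module) hk' - hk)).1
    exact (mul_eq_zero.1 hcx).resolve_right hx
  obtain ⟨k, hk⟩ := hAx (A v)
  rw [hc₀, zero_smul, zero_mul, zero_smul, sub_zero, zero_add, ← map_smul] at hk
  exact one_ne_zero (hli (-k) 1 (by rw [one_smul, neg_smul, neg_add_eq_zero]; exact (hA hk).symm)).2

end SchurComplement

/-! ### Factorizations into a diagonalizable and a unipotent endomorphism -/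

section TriangularFactorization

variable {F V : Type*} [Field F] [AddCommGroup V] [Module F V]

theorem hasEigenvalue_of_dual [FiniteDimensional F V] {f : End F V} {α : Dual F V} (hα : α ≠ 0)
    {m : F} (h : ∀ x, α (f x) = m * α x) : f.HasEigenvalue m := by
  by_contra hm
  have hinj : Function.Injective (f - m • 1 : End F V) := by
    rw [← LinearMap.ker_eq_bot]
    simpa [End.hasEigenvalue_iff, End.eigenspace_def, Algebra.algebraMap_eq_smul_one] using hm
  apply hα
  ext y
  obtain ⟨x, rfl⟩ := LinearMap.injective_iff_surjective.1 hinj y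
  simp [h]

/-- A factorization `A = lower * upper` where `upper` fixes the vector `fixed`, which lies in all
its nonzero invariant subspaces, and `lower` has distinct eigenvalues: `value`, carried by the left
eigenvector `form`, and `eigenvalues`, attained on `ker form`. -/
structure TriangularFactorization (A : End F V) where
  lower : End F V
  upper : End F V
  fixed : V
  form : Dual F V
  value : F
  eigenvalues : Finset F
  lower_mul_upper : lower * upper = A
  upper_fixed : upper fixed = fixed
  fixed_mem : ∀ C ∈ upper.invtSubmodule, C ≠ ⊥ → fixed ∈ C
  form_fixed : form fixed = 1
  form_lower : ∀ x, form (lower x) = value * form x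
  exists_hasEigenvector : ∀ k ∈ eigenvalues, ∃ x, lower.HasEigenvector k x ∧ form x = 0
  value_notMem : value ∉ eigenvalues
  card_eigenvalues_add_one : eigenvalues.card + 1 = finrank F V
  value_mul_prod : value * ∏ k ∈ eigenvalues, k = A.det

namespace TriangularFactorization

/-- All the eigenvalues of the factor `lower`. -/
def spectrum {A : End F V} (T : TriangularFactorization A) : Finset F :=
  .cons T.value T.eigenvalues T.value_notMem

theorem hasEigenvalue_lower [FiniteDimensional F V] {A : End F V} (T : TriangularFactorization A)
    {k : F} (hk : k ∈ T.spectrum) : T.lower.HasEigenvalue k := by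
  rcases Finset.mem_cons.1 hk with rfl | hk
  · refine hasEigenvalue_of_dual (fun h => ?_) T.form_lower
    simpa [h] using T.form_fixed
  · obtain ⟨x, hx, -⟩ := T.exists_hasEigenvector k hk
    exact End.hasEigenvalue_of_hasEigenvector hx

variable {A : End F V} {α : Dual F V} {v : V} (hv : α v = 1)

/-- The projection onto `ker α` along the vector `v`. -/
def kerProj : V →ₗ[F] LinearMap.ker α :=
  (LinearMap.id - α.smulRight v).codRestrict _ fun x => LinearMap.mem_ker.2 (by simp [hv])

theorem coe_kerProj (x : V) : (kerProj hv x : V) = x - α x • v := rfl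

theorem kerProj_coe (x : LinearMap.ker α) : kerProj hv x = x := by
  ext
  rw [coe_kerProj, LinearMap.mem_ker.1 x.2, zero_smul, sub_zero]

theorem kerProj_self : kerProj hv v = 0 := by
  ext
  rw [coe_kerProj, hv, one_smul, sub_self, ZeroMemClass.coe_zero]

variable (A) in
/-- Borders an endomorphism of `ker α` by the pivot column `A v`. -/
def borderLower (L : End F (LinearMap.ker α)) : End F V :=
  α.smulRight (A v) + (LinearMap.ker α).subtype ∘ₗ L ∘ₗ kerProj hv

theorem borderLower_apply (L : End F (LinearMap.ker α)) (x : V) :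
    borderLower A hv L x = α x • A v + L (kerProj hv x) := rfl

variable (A) in
/-- Borders an endomorphism of `ker α` by the normalized pivot row `(α ∘ A) / α (A v)`. -/
def borderUpper (U : End F (LinearMap.ker α)) : End F V :=
  (LinearMap.ker α).subtype ∘ₗ U ∘ₗ kerProj hv + ((α (A v))⁻¹ • α ∘ₗ A).smulRight v

theorem borderUpper_apply (U : End F (LinearMap.ker α)) (x : V) :
    borderUpper A hv U x = U (kerProj hv x) + (α (A x) / α (A v)) • v := by
  simp [borderUpper, div_eq_inv_mul]

theorem kerProj_borderUpper (U : End F (LinearMap.ker α)) (x : V) :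
    kerProj hv (borderUpper A hv U x) = U (kerProj hv x) := by
  rw [borderUpper_apply, map_add, map_smul, kerProj_self, kerProj_coe, smul_zero, add_zero]

theorem borderUpper_self (h : α (A v) ≠ 0) (U : End F (LinearMap.ker α)) :
    borderUpper A hv U v = v := by
  rw [borderUpper_apply, kerProj_self, map_zero, div_self h, one_smul, ZeroMemClass.coe_zero,
    zero_add]

theorem borderLower_mul_borderUpper (h : α (A v) ≠ 0) {L U : End F (LinearMap.ker α)}
    (hLU : L * U = schurComplement A α v h) : borderLower A hv L * borderUpper A hv U = A := by
  ext x
  have hαU : α (borderUpper A hv U x) = α (A x) / α (A v) := by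
    rw [borderUpper_apply, map_add, LinearMap.mem_ker.1 (U _).2, map_smul, hv, smul_eq_mul, mul_one,
      zero_add]
  rw [End.mul_apply, borderLower_apply, hαU, kerProj_borderUpper, ← End.mul_apply, hLU,
    coe_schurComplement_apply, coe_kerProj]
  simp only [map_sub, map_smul, smul_eq_mul, sub_div, mul_div_cancel_right₀ _ h]
  module

theorem mem_of_mem_invtSubmodule_borderUpper {U : End F (LinearMap.ker α)} {u : LinearMap.ker α}
    (hu : U u = u) (huA : α (A u) ≠ 0) (h : α (A v) ≠ 0)
    (hU : ∀ C ∈ U.invtSubmodule, C ≠ ⊥ → u ∈ C) {C : Submodule F V}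
    (hC : C ∈ (borderUpper A hv U).invtSubmodule) (hC₀ : C ≠ ⊥) : v ∈ C := by
  by_cases hmap : C.map (kerProj hv) = ⊥
  · obtain ⟨x, hx, hx₀⟩ := C.exists_mem_ne_zero_of_ne_bot hC₀
    have hπx : kerProj hv x = 0 := by
      rw [← Submodule.mem_bot F, ← hmap]
      exact Submodule.mem_map_of_mem hx
    have hxv : x = α x • v := by
      rw [← sub_eq_zero, ← coe_kerProj hv, hπx, ZeroMemClass.coe_zero]
    have hαx : α x ≠ 0 := fun hαx => hx₀ (by rw [hxv, hαx, zero_smul])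
    exact (C.smul_mem_iff hαx).1 (hxv ▸ hx)
  · have hinv : C.map (kerProj hv) ∈ U.invtSubmodule := by
      rintro _ ⟨x, hx, rfl⟩
      exact ⟨borderUpper A hv U x, hC hx, kerProj_borderUpper hv U x⟩
    obtain ⟨x, hx, hxu⟩ := hU _ hinv hmap
    have hsub : borderUpper A hv U x - x = (α (A u) / α (A v)) • v := by
      have hx' := coe_kerProj hv x
      rw [hxu] at hx'
      rw [borderUpper_apply, hxu, hu, hx']
      simp only [map_sub, map_smul, smul_eq_mul, sub_div, mul_div_cancel_right₀ _ h]
      module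
    rw [← C.smul_mem_iff (div_ne_zero huA h), ← hsub]
    exact C.sub_mem (hC hx) hx

/-- One step of Gaussian elimination, with pivot `α (A v)`. -/
def ofSchurComplement [FiniteDimensional F V] (h : α (A v) ≠ 0)
    (T : TriangularFactorization (schurComplement A α v h)) (hfixed : α (A T.fixed) ≠ 0)
    (hvalue : α (A v) ∉ T.spectrum) : TriangularFactorization A where
  lower := borderLower A hv T.lower
  upper := borderUpper A hv T.upper
  fixed := v
  form := α
  value := α (A v)
  eigenvalues := T.spectrum
  lower_mul_upper := borderLower_mul_borderUpper hv h T.lower_mul_upper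
  upper_fixed := borderUpper_self hv h T.upper
  fixed_mem _ := mem_of_mem_invtSubmodule_borderUpper hv T.upper_fixed hfixed h T.fixed_mem
  form_fixed := hv
  form_lower x := by
    rw [borderLower_apply, map_add, LinearMap.mem_ker.1 (T.lower _).2, map_smul, smul_eq_mul,
      add_zero, mul_comm]
  exists_hasEigenvector k hk := by
    obtain ⟨x, hx⟩ := (T.hasEigenvalue_lower hk).exists_hasEigenvector
    have hαx : α x = 0 := x.2
    refine ⟨x, End.hasEigenvector_iff.2 ⟨End.mem_eigenspace_iff.2 ?_, by simpa using hx.2⟩, hαx⟩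
    rw [borderLower_apply, kerProj_coe, hx.apply_eq_smul, hαx, zero_smul, zero_add,
      Submodule.coe_smul]
  value_notMem := hvalue
  card_eigenvalues_add_one := by
    have hα : α ≠ 0 := by
      rintro rfl
      simp at hv
    rw [spectrum, Finset.card_cons, T.card_eigenvalues_add_one,
      Dual.finrank_ker_add_one_of_ne_zero hα]
  value_mul_prod := by
    rw [spectrum, Finset.prod_cons, T.value_mul_prod, det_eq_mul_det_schurComplement hv h]

theorem exists_of_finrank_eq_one (hV : finrank F V = 1) (A : End F V) {β : Dual F V} (hβ : β ≠ 0) :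
    ∃ T : TriangularFactorization A, β T.fixed ≠ 0 ∧ T.spectrum = {A.det} := by
  obtain ⟨u, hu⟩ : ∃ u, β u ≠ 0 := by
    by_contra! h
    exact hβ (LinearMap.ext h)
  obtain ⟨c, rfl, -⟩ := LinearMap.existsUnique_eq_smul_id_of_finrank_eq_one hV A
  have hdet : (c • LinearMap.id : End F V).det = c := by simp [hV]
  exact ⟨{
    lower := c • LinearMap.id
    upper := 1
    fixed := u
    form := (β u)⁻¹ • β
    value := (c • LinearMap.id : End F V).det
    eigenvalues := ∅
    lower_mul_upper := mul_one _
    upper_fixed := rfl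
    fixed_mem C _ hC := by
      obtain ⟨x, hx, hx₀⟩ := C.exists_mem_ne_zero_of_ne_bot hC
      obtain ⟨r, rfl⟩ := exists_smul_eq_of_finrank_eq_one hV hx₀ u
      exact C.smul_mem r hx
    form_fixed := by simp [hu]
    form_lower x := by
      rw [hdet]
      simp
    exists_hasEigenvector := by simp
    value_notMem := Finset.notMem_empty _
    card_eigenvalues_add_one := by simp [hV]
    value_mul_prod := by rw [Finset.prod_empty, mul_one] }, hu, rfl⟩

include hv in
theorem exists_of_schurComplement [FiniteDimensional F V] (h : α (A v) ≠ 0)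
    (heig : ¬ A.HasEigenvalue (α (A v))) {E : Set F} (hE : α (A v) ∉ E)
    (hS : ∀ γ : Dual F (LinearMap.ker α), γ ≠ 0 →
      ∃ T : TriangularFactorization (schurComplement A α v h), γ T.fixed ≠ 0 ∧
        ∀ k ∈ T.spectrum, k ∉ insert (α (A v)) E) :
    ∃ T : TriangularFactorization A, T.fixed = v ∧ ∀ k ∈ T.spectrum, k ∉ E := by
  have hγ : (α ∘ₗ A).domRestrict (LinearMap.ker α) ≠ 0 := by
    intro hγ
    have hα : α ≠ 0 := by
      rintro rfl
      simp at hv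
    refine heig (hasEigenvalue_of_dual hα fun x => ?_)
    have hx := LinearMap.congr_fun hγ (kerProj hv x)
    rw [LinearMap.domRestrict_apply, coe_kerProj, LinearMap.comp_apply, map_sub, map_smul, map_sub,
      map_smul, smul_eq_mul, LinearMap.zero_apply] at hx
    linear_combination hx
  obtain ⟨T, hT, hspec⟩ := hS _ hγ
  have hvalue : α (A v) ∉ T.spectrum := fun hk => hspec _ hk (Set.mem_insert _ _)
  refine ⟨ofSchurComplement hv h T hT hvalue, rfl, fun k hk => ?_⟩
  rcases Finset.mem_cons.1 hk with rfl | hk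
  · exact hE
  · exact fun hkE => hspec k hk (Set.mem_insert_of_mem _ hkE)

theorem exists_pivot [Infinite F] [FiniteDimensional F V] (A : End F V) (hA : A.det ≠ 0) {E : Set F}
    (hE : E.Finite) : ∃ m ∉ E, m ≠ 0 ∧ ¬ A.HasEigenvalue m ∧ A.det / m ∉ insert m E := by
  have hroots : {m : F | (X ^ 2 - C A.det).IsRoot m}.Finite :=
    finite_setOfPred_isRoot (monic_X_pow_sub_C _ two_ne_zero).ne_zero
  obtain ⟨m, hm⟩ := ((((hE.union (Set.finite_singleton 0)).union
    (End.finite_hasEigenvalue A)).union (hE.image (A.det / ·))).union hroots).exists_notMem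
  simp only [Set.mem_union, Set.mem_singleton_iff, Set.mem_ofPred_eq, not_or] at hm
  obtain ⟨⟨⟨⟨hmE, hm₀⟩, heig⟩, hdiv⟩, hroot⟩ := hm
  refine ⟨m, hmE, hm₀, heig, fun hmem => ?_⟩
  rcases Set.mem_insert_iff.1 hmem with heq | hmem
  · rw [div_eq_iff hm₀] at heq
    simp [heq, pow_two] at hroot
  · exact hdiv ⟨_, hmem, div_div_cancel₀ hA⟩

theorem exists_of_finrank_eq_two [Infinite F] [FiniteDimensional F V] (hV : finrank F V = 2)
    {A : End F V} (hdet : A.det ≠ 0) (hA : ∀ c : F, A ≠ c • 1) {β : Dual F V} (hβ : β ≠ 0)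
    {E : Set F} (hE : E.Finite) :
    ∃ T : TriangularFactorization A, β T.fixed ≠ 0 ∧ ∀ k ∈ T.spectrum, k ∉ E := by
  obtain ⟨v, hβv, hli⟩ := exists_apply_ne_zero_and_linearIndependent hA hβ
  obtain ⟨m, hmE, hm, heig, hdiv⟩ := exists_pivot A hdet hE
  obtain ⟨α, hα⟩ := exists_dual_apply_eq hli ![1, m]
  have hv : α v = 1 := hα 0
  obtain rfl : α (A v) = m := hα 1
  have hα₀ : α ≠ 0 := by
    rintro rfl
    simp at hv
  have hker := Dual.finrank_ker_add_one_of_ne_zero hα₀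
  obtain ⟨T, rfl, hT⟩ := exists_of_schurComplement hv hm heig hmE fun γ hγ => by
    obtain ⟨T, hTγ, hT⟩ := exists_of_finrank_eq_one (by lia) (schurComplement A α v hm) hγ
    rw [det_eq_mul_det_schurComplement hv hm, mul_div_cancel_left₀ _ hm] at hdiv
    exact ⟨T, hTγ, by simpa [hT] using hdiv⟩
  exact ⟨T, hβv, hT⟩

end TriangularFactorization

open TriangularFactorization in
theorem exists_triangularFactorization [Infinite F] [FiniteDimensional F V] {A : End F V}
    (hdet : A.det ≠ 0) (hA : ∀ c : F, A ≠ c • 1) {β : Dual F V} (hβ : β ≠ 0) {E : Set F}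
    (hE : E.Finite) :
    ∃ T : TriangularFactorization A, β T.fixed ≠ 0 ∧ ∀ k ∈ T.spectrum, k ∉ E := by
  induction hV : finrank F V using Nat.strong_induction_on generalizing V E with
  | h n ih =>
  obtain ⟨v, hβv, hli⟩ := exists_apply_ne_zero_and_linearIndependent hA hβ
  have hn : 2 ≤ n := by simpa [hV] using hli.fintype_card_le_finrank
  obtain rfl | hn := hn.eq_or_lt
  · exact exists_of_finrank_eq_two hV hdet hA hβ hE
  obtain ⟨m, hmE, hm, heig, -⟩ := exists_pivot A hdet hE
  have hinj : Function.Injective A := (LinearMap.equivOfDetNeZero A hdet).injective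
  obtain ⟨α, hv, rfl, hS⟩ := exists_dual_schurComplement_ne_smul (by lia) hinj hli hm
  have hα₀ : α ≠ 0 := by
    rintro rfl
    simp at hv
  have hker := Dual.finrank_ker_add_one_of_ne_zero hα₀
  have hdetS : (schurComplement A α v hm).det ≠ 0 := by
    rw [det_eq_mul_det_schurComplement hv hm] at hdet
    exact right_ne_zero_of_mul hdet
  obtain ⟨T, rfl, hT⟩ := exists_of_schurComplement hv hm heig hmE fun γ hγ =>
    ih _ (by lia) hdetS (hS hm) hγ (hE.insert _) rfl
  exact ⟨T, hβv, hT⟩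

end TriangularFactorization

/-! ### Pole placement -/

section PolePlacement

variable {F V : Type*} [Field F] [AddCommGroup V] [Module F V]

theorem linearIndependent_pow_of_dual {n : ℕ} {U : End F V} {α : Dual F V} {x : V}
    (hx : ∀ i < n, α ((U ^ i) x) = if i + 1 = n then 1 else 0) :
    LinearIndependent F fun i : Fin n => (U ^ (i : ℕ)) x := by
  let Θ : V →ₗ[F] Fin n → F := LinearMap.pi fun j => α ∘ₗ (U ^ (j.rev : ℕ))
  let H : Matrix (Fin n) (Fin n) F := .of fun i => Θ ((U ^ (i : ℕ)) x)
  have hH (i j) (hij : i ≤ j) : H i j = if i = j then 1 else 0 := by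
    change α ((U ^ (j.rev : ℕ)) ((U ^ (i : ℕ)) x)) = _
    rw [← End.mul_apply, ← pow_add, hx _ (by grind)]
    congr 1
    grind
  have htriangular : H.IsLowerTriangular := fun i j (hij : i < j) => by
    rw [hH i j hij.le, if_neg hij.ne]
  have hdet : H.det = 1 := by
    rw [Matrix.det_of_isLowerTriangular H htriangular]
    exact Finset.prod_eq_one fun i _ => by rw [hH i i le_rfl, if_pos rfl]
  exact .of_comp Θ (Matrix.linearIndependent_rows_of_det_ne_zero (by simp [hdet] : H.det ≠ 0))

variable [FiniteDimensional F V]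

theorem exists_basis_pow_of_observable {U : End F V} {α : Dual F V}
    (hobs : ∀ x, (∀ p : F[X], α (aeval U p x) = 0) → x = 0) :
    ∃ (x : V) (b : Basis (Fin (finrank F V)) F V), (∀ i, b i = (U ^ (i : ℕ)) x) ∧
      ∀ i, α (b i) = if (i : ℕ) + 1 = finrank F V then 1 else 0 := by
  let Θ : V →ₗ[F] Fin (finrank F V) → F := LinearMap.pi fun j => α ∘ₗ (U ^ (j.rev : ℕ))
  have hΘ (x : V) (j) : Θ x j = α ((U ^ (j.rev : ℕ)) x) := rfl
  have hinj : Function.Injective Θ := by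
    rw [← LinearMap.ker_eq_bot, LinearMap.ker_eq_bot']
    refine fun x hx => hobs x fun p => ?_
    have hle : Submodule.span F (Set.range fun i : Fin (finrank F V) => (U ^ (i : ℕ)) x) ≤
        LinearMap.ker α := by
      rw [Submodule.span_le]
      rintro _ ⟨i, rfl⟩
      simpa [hΘ] using congrFun hx i.rev
    exact hle (aeval_apply_mem_span_range_pow U x p)
  obtain ⟨x, hx⟩ := (LinearMap.injective_iff_surjective_of_finrank_eq_finrank (by simp)).1 hinj
    fun j => if (j : ℕ) = 0 then 1 else 0
  have hαx (i : ℕ) (hi : i < finrank F V) :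
      α ((U ^ i) x) = if i + 1 = finrank F V then 1 else 0 := by
    have hxi := congrFun hx (Fin.rev ⟨i, hi⟩)
    rw [hΘ, Fin.rev_rev, Fin.val_rev] at hxi
    rw [hxi]
    congr 1
    grind
  have hli := linearIndependent_pow_of_dual hαx
  have hspan := hli.span_eq_top_of_card_eq_finrank' (Fintype.card_fin _)
  exact ⟨x, Basis.mk hli hspan.ge, Basis.mk_apply hli hspan.ge,
    fun i => by rw [Basis.mk_apply, hαx i i.2]⟩

theorem exists_conj_eq_add_smulRight {U Y : End F V} (hY : IsCyclicEnd Y) {α : Dual F V}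
    (hobs : ∀ x, (∀ p : F[X], α (aeval U p x) = 0) → x = 0) :
    ∃ (e : V ≃ₗ[F] V) (c : V), e.conj Y = U + α.smulRight c := by
  obtain ⟨x, b, hb, hαb⟩ := exists_basis_pow_of_observable hobs
  obtain ⟨y, bY, hbY⟩ := hY.exists_basis
  let e : V ≃ₗ[F] V := bY.equiv b (Equiv.refl _)
  have he (i) : e (bY i) = b i := bY.equiv_apply i b (Equiv.refl _)
  refine ⟨e, e ((Y ^ finrank F V) y) - (U ^ finrank F V) x, b.ext fun i => ?_⟩
  have hsucc : e.conj Y (b i) = e ((Y ^ (i + 1 : ℕ)) y) := by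
    rw [LinearEquiv.conj_apply_apply, ← he, e.symm_apply_apply, hbY, ← End.mul_apply, ← pow_succ']
  rw [hsucc, LinearMap.add_apply, LinearMap.smulRight_apply, hαb, hb, ← End.mul_apply, ← pow_succ']
  split_ifs with hi
  · rw [hi, one_smul, add_sub_cancel]
  · have hlt : (i : ℕ) + 1 < finrank F V := lt_of_le_of_ne i.2 hi
    have hnext := he ⟨i + 1, hlt⟩
    rw [hbY, hb] at hnext
    rw [hnext, zero_smul, add_zero]

theorem TriangularFactorization.exists_conj_apply_eq {A : End F V} (T : TriangularFactorization A)
    {Y : End F V} (hY : IsCyclicEnd Y) :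
    ∃ e : V ≃ₗ[F] V, ∀ x, T.form (T.upper x) = 0 → e.conj Y x = T.upper x := by
  have hobs (x : V) (hx : ∀ p : F[X], (T.form ∘ₗ T.upper) (aeval T.upper p x) = 0) : x = 0 := by
    let C := LinearMap.range (LinearMap.applyₗ x ∘ₗ (aeval (R := F) T.upper).toLinearMap)
    have hC : C ∈ T.upper.invtSubmodule := by
      rintro _ ⟨p, rfl⟩
      exact ⟨X * p, by simp⟩
    by_contra hx₀
    obtain ⟨p, hp⟩ := T.fixed_mem C hC (C.ne_bot_iff.2 ⟨x, ⟨1, by simp⟩, hx₀⟩)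
    have hzero := hx p
    change aeval T.upper p x = T.fixed at hp
    rw [hp, LinearMap.comp_apply, T.upper_fixed, T.form_fixed] at hzero
    exact one_ne_zero hzero
  obtain ⟨e, c, he⟩ := exists_conj_eq_add_smulRight hY hobs
  refine ⟨e, fun x hx => ?_⟩
  rw [he, LinearMap.add_apply, LinearMap.smulRight_apply, LinearMap.comp_apply, hx, zero_smul,
    add_zero]

end PolePlacement

/-! ### Prescribed eigenvalues -/

section Eigenvalues

variable {F V : Type*} [Field F] [AddCommGroup V] [Module F V] [FiniteDimensional F V]

/-- With `M = {m₁, …, mₖ}` and cyclic vectors `v`, `u` of `A`, `B`, choose `P` to send the basis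
`Bⁱ u` to a rescaling of the reversed basis `Aᵏ⁻ⁱ v`. Then `P.conj B` moves each of these basis
vectors but the last to its successor, and `A` moves it back up to the factor `mᵢ`. -/
theorem IsCyclicEnd.exists_hasEigenvalue_mul_conj {A B : End F V} (hA : IsCyclicEnd A)
    (hB : IsCyclicEnd B) {M : Finset F} (hM : M.card + 1 = finrank F V) (h₀ : 0 ∉ M) :
    ∃ P : V ≃ₗ[F] V, ∀ k ∈ M, (A * P.conj B).HasEigenvalue k := by
  have hbasisA := hA.exists_basis
  have hbasisB := hB.exists_basis
  rw [← hM] at hbasisA hbasisB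
  obtain ⟨v, a, ha⟩ := hbasisA
  obtain ⟨u, b, hb⟩ := hbasisB
  let m (i : Fin M.card) : Fˣ := Units.mk0 (M.equivFin.symm i) fun h => h₀ (h ▸ Subtype.coe_prop _)
  let e : Basis (Fin (M.card + 1)) F V :=
    (a.reindex Fin.revPerm).unitsSMul (Fin.partialProd m)
  have he (i) : e i = Fin.partialProd m i • (A ^ (i.rev : ℕ)) v := by
    rw [Basis.unitsSMul_apply, Basis.reindex_apply, ha, Fin.revPerm_symm, Fin.revPerm_apply]
  let P : V ≃ₗ[F] V := b.equiv e (Equiv.refl _)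
  have hP (i) : P (b i) = e i := b.equiv_apply i e (Equiv.refl _)
  have hB (i : Fin M.card) : P.conj B (e i.castSucc) = e i.succ := by
    rw [LinearEquiv.conj_apply_apply, ← hP, P.symm_apply_apply, ← hP, hb, hb, ← End.mul_apply,
      ← pow_succ', Fin.val_castSucc, Fin.val_succ]
  have hA (i : Fin M.card) : A (e i.succ) = (m i : F) • e i.castSucc := by
    rw [he, he, Fin.partialProd_succ, Units.smul_def, Units.smul_def, map_smul, ← End.mul_apply,
      ← pow_succ', Fin.rev_castSucc, Fin.rev_succ, Fin.val_succ, Fin.val_castSucc, smul_smul,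
      Units.val_mul, mul_comm]
  refine ⟨P, fun k hk => ?_⟩
  obtain ⟨i, hi⟩ : ∃ i, (m i : F) = k := ⟨M.equivFin ⟨k, hk⟩, by simp [m]⟩
  refine End.hasEigenvalue_of_hasEigenvector (x := e i.castSucc)
    (End.hasEigenvector_iff.2 ⟨End.mem_eigenspace_iff.2 ?_, e.ne_zero _⟩)
  rw [End.mul_apply, hB, hA, hi]

theorem hasEigenvalue_of_det_eq_mul_prod {f : End F V} {M : Finset F}
    (hM : M.card + 1 = finrank F V) (h₀ : 0 ∉ M) (hf : ∀ k ∈ M, f.HasEigenvalue k) {m : F}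
    (hdet : f.det = m * ∏ k ∈ M, k) : f.HasEigenvalue m := by
  have hmonic := f.charpoly_monic
  have hle : M.val ≤ f.charpoly.roots := by
    refine (Multiset.le_iff_subset M.nodup).2 fun k hk => ?_
    exact (mem_roots hmonic.ne_zero).2 ((f.hasEigenvalue_iff_isRoot_charpoly k).1 (hf k hk))
  obtain ⟨q, hq⟩ := (Multiset.prod_X_sub_C_dvd_iff_le_roots hmonic.ne_zero _).2 hle
  have hdeg : q.natDegree = 1 := by
    have h := f.charpoly_natDegree
    have hM' := monic_multisetProd_X_sub_C M.val
    rw [hq, hM'.natDegree_mul' (by rintro rfl; simp [hq] at hmonic),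
      natDegree_multiset_prod_X_sub_C_eq_card, ← hM] at h
    exact Nat.add_left_cancel h
  have hsplits : f.charpoly.Splits := by
    rw [hq]
    exact (Splits.multisetProd (by simp)).mul (.of_natDegree_eq_one hdeg)
  obtain ⟨s, hs⟩ := Multiset.le_iff_exists_add.1 hle
  obtain ⟨a, rfl⟩ : ∃ a, s = {a} := by
    have hcard := hsplits.natDegree_eq_card_roots
    rw [f.charpoly_natDegree, hs, Multiset.card_add, ← hM] at hcard
    exact Multiset.card_eq_one.1 (Nat.add_left_cancel hcard).symm
  have ha : a = m := by
    have hprod : ∏ k ∈ M, k = M.val.prod := congrArg Multiset.prod (Multiset.map_id' _)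
    rw [End.det_eq_prod_roots_charpoly_of_splits hsplits, hs, Multiset.prod_add,
      Multiset.prod_singleton, hprod, mul_comm] at hdet
    exact mul_right_cancel₀ (Multiset.prod_ne_zero h₀) hdet
  rw [f.hasEigenvalue_iff_isRoot_charpoly, ← mem_roots hmonic.ne_zero, hs, ← ha]
  simp

theorem exists_conj_eq_of_hasEigenvalue {f g : End F V} {s : Finset F}
    (hs : s.card = finrank F V) (hf : ∀ k ∈ s, f.HasEigenvalue k)
    (hg : ∀ k ∈ s, g.HasEigenvalue k) : ∃ e : V ≃ₗ[F] V, e.conj f = g := by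
  have key (h : End F V) (hh : ∀ k ∈ s, h.HasEigenvalue k) :
      ∃ b : Basis s F V, ∀ k, h (b k) = (k : F) • b k := by
    choose x hx using fun k : s => (hh k k.2).exists_hasEigenvector
    have hli := h.eigenvectors_linearIndependent' ((↑) : s → F) Subtype.coe_injective x hx
    have hspan := hli.span_eq_top_of_card_eq_finrank' (by rw [Fintype.card_coe, hs])
    exact ⟨Basis.mk hli hspan.ge, fun k => by rw [Basis.mk_apply, (hx k).apply_eq_smul]⟩
  obtain ⟨b, hb⟩ := key f hf
  obtain ⟨c, hc⟩ := key g hg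
  have hbc (k) : b.equiv c (Equiv.refl _) (b k) = c k := b.equiv_apply k c (Equiv.refl _)
  refine ⟨b.equiv c (Equiv.refl _), c.ext fun k => ?_⟩
  rw [LinearEquiv.conj_apply_apply, ← hbc, LinearEquiv.symm_apply_apply, hb, map_smul, hbc, hc]

end Eigenvalues

/-! ### Products of conjugates of cyclic elements -/

section CyclicProducts

open SpecialLinearGroup

variable {F V : Type*} [Field F] [AddCommGroup V] [Module F V]

namespace TriangularFactorization

variable {g : SpecialLinearGroup F V} (T : TriangularFactorization (g : End F V))
include T

theorem value_mul_prod_eq_one : T.value * ∏ k ∈ T.eigenvalues, k = 1 := by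
  rw [T.value_mul_prod, g.det_eq_one]

theorem zero_notMem_eigenvalues : 0 ∉ T.eigenvalues := fun h => by
  simpa [Finset.prod_eq_zero h] using T.value_mul_prod_eq_one

variable [FiniteDimensional F V]

theorem hasEigenvalue_of_mem_spectrum {h : SpecialLinearGroup F V}
    (hh : ∀ k ∈ T.eigenvalues, End.HasEigenvalue (h : End F V) k) {k : F} (hk : k ∈ T.spectrum) :
    End.HasEigenvalue (h : End F V) k := by
  rcases Finset.mem_cons.1 hk with rfl | hk
  · exact hasEigenvalue_of_det_eq_mul_prod T.card_eigenvalues_add_one T.zero_notMem_eigenvalues hh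
      (h.det_eq_one.trans T.value_mul_prod_eq_one.symm)
  · exact hh k hk

/-- If the conjugate of `y` agrees with `T.upper` on `T.upper ⁻¹ (ker T.form)`, then the cofactor
`t` agrees with `T.lower` on `ker T.form`. -/
theorem exists_eq_mul_conj {y : SpecialLinearGroup F V} (hy : IsCyclicEnd (y : End F V)) :
    ∃ (e : V ≃ₗ[F] V) (t : SpecialLinearGroup F V), g = t * congr_linearEquiv e y ∧
      ∀ k ∈ T.eigenvalues, End.HasEigenvalue (t : End F V) k := by
  obtain ⟨e, he⟩ := T.exists_conj_apply_eq hy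
  refine ⟨e, g * (congr_linearEquiv e y)⁻¹, (inv_mul_cancel_right _ _).symm, fun k hk => ?_⟩
  have hsurj : Function.Surjective T.upper := by
    refine LinearMap.injective_iff_surjective.1 (.of_comp (f := T.lower) ?_)
    rw [← End.coe_mul, T.lower_mul_upper]
    exact g.1.injective
  obtain ⟨x, hx, hform⟩ := T.exists_hasEigenvector k hk
  obtain ⟨x, rfl⟩ := hsurj x
  have hyx : congr_linearEquiv e y x = T.upper x := he x hform
  have hgx : T.lower (T.upper x) = g x := LinearMap.congr_fun T.lower_mul_upper x
  refine End.hasEigenvalue_of_hasEigenvector (x := T.upper x)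
    (End.hasEigenvector_iff.2 ⟨End.mem_eigenspace_iff.2 ?_, hx.2⟩)
  rw [← hx.apply_eq_smul, hgx, ← hyx]
  exact congrArg g ((congr_linearEquiv e y).1.symm_apply_apply x)

end TriangularFactorization

variable [FiniteDimensional F V]

theorem exists_triangularFactorization_of_notMem_center [Infinite F] {g : SpecialLinearGroup F V}
    (hg : g ∉ Subgroup.center (SpecialLinearGroup F V)) :
    Nonempty (TriangularFactorization (g : End F V)) := by
  have hA (c : F) : (g : End F V) ≠ c • 1 := fun hc => hg (mem_center_iff.2
    ⟨c, by simpa [hc] using g.det_eq_one, hc⟩)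
  have : Nontrivial V := by
    by_contra! hV
    exact hA 0 (Subsingleton.elim _ _)
  obtain ⟨v, hv⟩ := exists_ne (0 : V)
  obtain ⟨β, hβ⟩ := Module.Projective.exists_dual_ne_zero F hv
  have hβ₀ : β ≠ 0 := by
    rintro rfl
    exact hβ rfl
  obtain ⟨T, -, -⟩ := exists_triangularFactorization (A := (g : End F V))
    (by rw [g.det_eq_one]; exact one_ne_zero) hA hβ₀ Set.finite_empty
  exact ⟨T⟩

theorem exists_eq_conj_mul_conj_mul_conj [Infinite F] {g a b y : SpecialLinearGroup F V}
    (hg : g ∉ Subgroup.center (SpecialLinearGroup F V)) (ha : IsCyclicEnd (a : End F V))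
    (hb : IsCyclicEnd (b : End F V)) (hy : IsCyclicEnd (y : End F V)) :
    ∃ P Q R : V ≃ₗ[F] V,
      g = congr_linearEquiv P a * congr_linearEquiv Q b * congr_linearEquiv R y := by
  obtain ⟨T⟩ := exists_triangularFactorization_of_notMem_center hg
  obtain ⟨R, t, hgt, ht⟩ := T.exists_eq_mul_conj hy
  obtain ⟨Q, hab⟩ := ha.exists_hasEigenvalue_mul_conj hb T.card_eigenvalues_add_one
    T.zero_notMem_eigenvalues
  have hcard : T.spectrum.card = finrank F V := by
    rw [← T.card_eigenvalues_add_one]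
    exact Finset.card_cons _
  obtain ⟨P, hP⟩ := exists_conj_eq_of_hasEigenvalue hcard
    (fun k => T.hasEigenvalue_of_mem_spectrum (h := a * congr_linearEquiv Q b) hab)
    (fun k => T.hasEigenvalue_of_mem_spectrum ht)
  have hPt : congr_linearEquiv P (a * congr_linearEquiv Q b) = t :=
    Subtype.ext (LinearEquiv.toLinearMap_injective hP)
  refine ⟨P, Q.trans P, R, ?_⟩
  rw [hgt, ← hPt, map_mul, ← congr_linearEquiv_trans]
  rfl

theorem exists_eq_mul_mul_of_notMem_center [Infinite F] {d₁ d₂ d₃ : ℕ} {w₁ : FreeGroup (Fin d₁)}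
    {w₂ : FreeGroup (Fin d₂)} {w₃ : FreeGroup (Fin d₃)} (hw₁ : w₁ ≠ 1) (hw₂ : w₂ ≠ 1) (hw₃ : w₃ ≠ 1)
    {g : SpecialLinearGroup F V} (hg : g ∉ Subgroup.center (SpecialLinearGroup F V)) :
    ∃ g₁ ∈ wordValues w₁ (SpecialLinearGroup F V), ∃ g₂ ∈ wordValues w₂ (SpecialLinearGroup F V),
      ∃ g₃ ∈ wordValues w₃ (SpecialLinearGroup F V), g = g₁ * g₂ * g₃ := by
  obtain ⟨a, ha, hacyc, -⟩ := hasCyclicValue (F := F) hw₁ V isCoprime_one_right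
  obtain ⟨b, hb, hbcyc, -⟩ := hasCyclicValue (F := F) hw₂ V isCoprime_one_right
  obtain ⟨y, hy, hycyc, -⟩ := hasCyclicValue (F := F) hw₃ V isCoprime_one_right
  obtain ⟨P, Q, R, rfl⟩ := exists_eq_conj_mul_conj_mul_conj hg hacyc hbcyc hycyc
  have hconj {d : ℕ} {w : FreeGroup (Fin d)} (e : V ≃ₗ[F] V) {x : SpecialLinearGroup F V}
      (hx : x ∈ wordValues w (SpecialLinearGroup F V)) :
      congr_linearEquiv e x ∈ wordValues w (SpecialLinearGroup F V) :=
    map_mem_wordValues (congr_linearEquiv e).toMonoidHom hx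
  exact ⟨_, hconj P ha, _, hconj Q hb, _, hconj R hy, rfl⟩

end CyclicProducts

theorem sl_waring_three_noncentral_general {F : Type*} [Field F] [Infinite F] {ι : Type*}
    [Fintype ι] [DecidableEq ι] {d₁ d₂ d₃ : ℕ} {w₁ : FreeGroup (Fin d₁)} {w₂ : FreeGroup (Fin d₂)}
    {w₃ : FreeGroup (Fin d₃)} (hw₁ : w₁ ≠ 1) (hw₂ : w₂ ≠ 1) (hw₃ : w₃ ≠ 1)
    {g : Matrix.SpecialLinearGroup ι F}
    (hg : g ∉ Subgroup.center (Matrix.SpecialLinearGroup ι F)) :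
    ∃ g₁ ∈ wordValues w₁ (Matrix.SpecialLinearGroup ι F),
      ∃ g₂ ∈ wordValues w₂ (Matrix.SpecialLinearGroup ι F),
        ∃ g₃ ∈ wordValues w₃ (Matrix.SpecialLinearGroup ι F), g = g₁ * g₂ * g₃ := by
  let φ : Matrix.SpecialLinearGroup ι F ≃* SpecialLinearGroup F (ι → F) :=
    Matrix.SpecialLinearGroup.toLin'_equiv
  obtain ⟨g₁, hg₁, g₂, hg₂, g₃, hg₃, h⟩ := exists_eq_mul_mul_of_notMem_center hw₁ hw₂ hw₃
    (mt (MulEquivClass.apply_mem_center_iff φ).1 hg)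
  refine ⟨φ.symm g₁, map_mem_wordValues φ.symm.toMonoidHom hg₁, φ.symm g₂,
    map_mem_wordValues φ.symm.toMonoidHom hg₂, φ.symm g₃,
    map_mem_wordValues φ.symm.toMonoidHom hg₃, ?_⟩
  rw [← map_mul, ← map_mul, ← h, φ.symm_apply_apply]

/-- If `F` is an infinite field, `n ≥ 3`, and `w₁, w₂, w₃` are nontrivial words, then every
noncentral element of `SL_n(F)` is in `w₁(SL_n(F)) · w₂(SL_n(F)) · w₃(SL_n(F))`. -/
theorem sl_waring_three_noncentral {F : Type*} [Field F] [Infinite F]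
    (n : ℕ) (hn : 3 ≤ n) {d₁ d₂ d₃ : ℕ}
    (w₁ : FreeGroup (Fin d₁)) (w₂ : FreeGroup (Fin d₂)) (w₃ : FreeGroup (Fin d₃))
    (hw₁ : w₁ ≠ 1) (hw₂ : w₂ ≠ 1) (hw₃ : w₃ ≠ 1) :
    ∀ g : Matrix.SpecialLinearGroup (Fin n) F,
      g ∉ Subgroup.center (Matrix.SpecialLinearGroup (Fin n) F) →
      ∃ g₁ ∈ wordValues w₁ (Matrix.SpecialLinearGroup (Fin n) F),
        ∃ g₂ ∈ wordValues w₂ (Matrix.SpecialLinearGroup (Fin n) F),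
          ∃ g₃ ∈ wordValues w₃ (Matrix.SpecialLinearGroup (Fin n) F), g = g₁ * g₂ * g₃ :=
  fun _ => sl_waring_three_noncentral_general hw₁ hw₂ hw₃
end

section
/- Let F be an infinite field, let k ≥ 2 be an integer, and let m, n be positive integers. Then every element g of SL_k(F) that is not in the center Z(SL_k(F)) can be written as g = x^m y^n for some x, y ∈ SL_k(F). -/
/-!
Every nonscalar invertible matrix `A` with `det A = ∏ βᵢ γᵢ` is a product `X * Y`, where `X` has
eigenvalues `βᵢ` and `Y` has eigenvalues `γᵢ` (Sourour's factorization). A conjugation by a shear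
makes the top left entry of `A` equal to `β₁ γ₁`; the Schur complement of that entry then has the
remaining eigenvalue products as determinant, the shear can be chosen so that the complement is
again nonscalar unless it is `1 × 1`, and a factorization of the complement extends to one of `A`
with `X` lower and `Y` upper block triangular.

For a field with enough elements, take `βᵢ = bᵢ ^ m` and `γᵢ = cᵢ ^ n`, both families injective and
with `∏ bᵢ = ∏ cᵢ = 1`: powers of a single element of large order whose exponents are symmetric
about `0` will do. Then `X` and `Y` are diagonalizable, so they are an `m`-th and an `n`-th power of
matrices with eigenvalues `bᵢ` and `cᵢ`.
-/

open Matrix Polynomial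

section RankOne

variable {F μ κ : Type*} [Field F] [Unique μ] [Fintype κ]

theorem exists_mul_eq_of_ne_zero {c : Matrix κ μ F} (hc : c ≠ 0) (s : Matrix μ μ F) :
    ∃ g : Matrix μ κ F, g * c = s := by
  classical
  obtain ⟨i, hi⟩ : ∃ i, c i default ≠ 0 := by
    by_contra! h
    exact hc (Matrix.ext fun i j ↦ by rw [Unique.eq_default j, h, Matrix.zero_apply])
  refine ⟨of fun _ ↦ Pi.single i (s default default / c i default), ?_⟩
  ext p q
  simp [Unique.eq_default p, Unique.eq_default q, Matrix.mul_apply, Pi.single_apply, hi]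

theorem exists_ne_zero_mul_eq_zero [Nontrivial κ] (c : Matrix κ μ F) :
    ∃ h : Matrix μ κ F, h ≠ 0 ∧ h * c = 0 := by
  obtain ⟨v, hv, hvc⟩ := exists_ne_zero_dotProduct_eq_zero fun i ↦ c i default
  refine ⟨replicateRow μ v, (replicateRow_eq_zero v).not.mpr hv, ?_⟩
  ext p q
  rw [Unique.eq_default q]
  exact hvc

theorem mul_notMem_range_scalar [Fintype μ] [DecidableEq κ] [Nontrivial κ]
    {u : Matrix κ μ F} {w : Matrix μ κ F} (hu : u ≠ 0) (hw : w ≠ 0) :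
    u * w ∉ Set.range (scalar κ) := by
  rintro ⟨s, hs⟩
  have huw : u * w = vecMulVec (fun p ↦ u p default) (w default) := by
    ext p q
    simp [Matrix.mul_apply, vecMulVec_apply]
  have hs0 : s = 0 := by
    have hdet := congrArg det (hs.trans huw)
    rw [det_vecMulVec] at hdet
    simpa using hdet
  rw [huw, hs0, map_zero, eq_comm, vecMulVec_eq_zero] at hs
  rcases hs with h | h
  · exact hu (Matrix.ext fun p q ↦ by rw [Unique.eq_default q]; exact congrFun h p)
  · exact hw (Matrix.ext fun p q ↦ by rw [Unique.eq_default p]; exact congrFun h q)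

end RankOne

section Shear

variable {F μ κ : Type*} [Field F] [Fintype μ] [DecidableEq μ] [Fintype κ] [DecidableEq κ]
  {a : Matrix μ μ F} {r : Matrix μ κ F} {c : Matrix κ μ F} {D : Matrix κ κ F}

/-- The block matrix `[1, g; 0, 1]` as an invertible matrix. Conjugation by it prescribes the upper
left block of a block matrix. -/
def shear (g : Matrix μ κ F) : (Matrix (μ ⊕ κ) (μ ⊕ κ) F)ˣ where
  val := fromBlocks 1 g 0 1
  inv := fromBlocks 1 (-g) 0 1
  val_inv := by simp [fromBlocks_multiply]
  inv_val := by simp [fromBlocks_multiply]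

/-- The Schur complement of the upper left block `diagonal d` in `shear g * [a, r; c, D]`, where
`a + g * c = diagonal d` is understood. The conjugate `shear g * [a, r; c, D] * (shear g)⁻¹` has the
same Schur complement. -/
def shearedSchur (d : μ → F) (r : Matrix μ κ F) (c : Matrix κ μ F) (D : Matrix κ κ F)
    (g : Matrix μ κ F) : Matrix κ κ F :=
  D - c * diagonal d⁻¹ * (r + g * D)

theorem det_fromBlocks_eq_mul_det_shearedSchur {d : μ → F} (hd : ∀ i, d i ≠ 0)
    {g : Matrix μ κ F} (hg : a + g * c = diagonal d) :
    (fromBlocks a r c D).det = (∏ i, d i) * (shearedSchur d r c D g).det := by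
  have hshear : (shear g).val * fromBlocks a r c D = fromBlocks (diagonal d) (r + g * D) c D := by
    simp [shear, fromBlocks_multiply, hg]
  have hdd : diagonal d * diagonal d⁻¹ = 1 := by simp [hd]
  let _ := invertibleOfRightInverse (diagonal d) (diagonal d⁻¹) hdd
  calc
    (fromBlocks a r c D).det = ((shear g).val * fromBlocks a r c D).det := by
      simp [det_mul, shear]
    _ = (∏ i, d i) * (shearedSchur d r c D g).det := by
      rw [hshear, det_fromBlocks₁₁, det_diagonal, invOf_eq_right_inv hdd, shearedSchur]

theorem exists_shearedSchur_notMem_range_scalar [Unique μ] (hdet : (fromBlocks a r c D).det ≠ 0)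
    (hc : c ≠ 0) {d : μ → F} (hd : ∀ i, d i ≠ 0) :
    ∃ g : Matrix μ κ F, a + g * c = diagonal d ∧
      (Nontrivial κ → shearedSchur d r c D g ∉ Set.range (scalar κ)) := by
  obtain ⟨g, hg⟩ := exists_mul_eq_of_ne_zero hc (diagonal d - a)
  replace hg : a + g * c = diagonal d := by rw [hg, add_sub_cancel]
  by_cases hS : shearedSchur d r c D g ∈ Set.range (scalar κ)
  swap
  · exact ⟨g, hg, fun _ ↦ hS⟩
  rcases subsingleton_or_nontrivial κ with hκ | hκ
  · exact ⟨g, hg, fun h ↦ absurd h (not_nontrivial κ)⟩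
  obtain ⟨h, hh, hhc⟩ := exists_ne_zero_mul_eq_zero c
  refine ⟨g + h, by rw [Matrix.add_mul, hhc, add_zero, hg], fun _ hS' ↦ ?_⟩
  have hhD : h * D ≠ 0 := by
    intro hhD
    have hmul : fromBlocks 0 h 0 0 * fromBlocks a r c D = (0 : Matrix (μ ⊕ κ) (μ ⊕ κ) F) := by
      simp [fromBlocks_multiply, hhc, hhD]
    have hunit := (isUnit_iff_isUnit_det _).mpr hdet.isUnit
    have hzero := hunit.mul_left_eq_zero.mp hmul
    exact hh (by simpa using! congrArg toBlocks₁₂ hzero)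
  have hcd : c * diagonal d⁻¹ ≠ 0 := by
    intro hcd
    have hdd : diagonal d⁻¹ * diagonal d = 1 := by simp [hd]
    apply hc
    rw [← Matrix.mul_one c, ← hdd, ← Matrix.mul_assoc, hcd, Matrix.zero_mul]
  have hdiff : shearedSchur d r c D g - shearedSchur d r c D (g + h) =
      c * diagonal d⁻¹ * (h * D) := by
    simp only [shearedSchur, Matrix.add_mul, Matrix.mul_add]
    abel
  refine mul_notMem_range_scalar hcd hhD ?_
  rw [← hdiff]
  exact (scalar κ : F →+* Matrix κ κ F).range.sub_mem hS hS'

end Shear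

section Factorization

variable {F ι μ κ : Type*} [Field F]
  [Fintype ι] [DecidableEq ι] [Fintype μ] [DecidableEq μ] [Fintype κ] [DecidableEq κ]

/-- `A` is a product of a matrix with eigenvalues `β` and a matrix with eigenvalues `γ`. Prescribing
the characteristic polynomials accounts for multiplicities; neither factor has to be
diagonalizable. -/
def FactorsWithSpectra (A : Matrix ι ι F) (β γ : ι → F) : Prop :=
  ∃ X Y : Matrix ι ι F, A = X * Y ∧
    X.charpoly = ∏ i, (Polynomial.X - C (β i)) ∧ Y.charpoly = ∏ i, (Polynomial.X - C (γ i))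

namespace FactorsWithSpectra

theorem of_conj {A : Matrix ι ι F} {β γ : ι → F} (P : (Matrix ι ι F)ˣ)
    (h : FactorsWithSpectra (P.val * A * P⁻¹.val) β γ) : FactorsWithSpectra A β γ := by
  obtain ⟨X, Y, hXY, hX, hY⟩ := h
  refine ⟨P⁻¹.val * X * P.val, P⁻¹.val * Y * P.val, ?_, ?_, ?_⟩
  · calc
      A = P⁻¹.val * (P.val * A * P⁻¹.val) * P.val := by
        simp only [mul_assoc, Units.inv_mul, Units.inv_mul_cancel_left, mul_one]
      _ = P⁻¹.val * X * P.val * (P⁻¹.val * Y * P.val) := by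
        simp only [hXY, mul_assoc, Units.mul_inv_cancel_left]
  · rw [coe_units_inv, charpoly_units_conj', hX]
  · rw [coe_units_inv, charpoly_units_conj', hY]

theorem of_submatrix (e : κ ≃ ι) {A : Matrix ι ι F} {β γ : ι → F}
    (h : FactorsWithSpectra (A.submatrix e e) (β ∘ e) (γ ∘ e)) : FactorsWithSpectra A β γ := by
  obtain ⟨X, Y, hXY, hX, hY⟩ := h
  refine ⟨reindex e e X, reindex e e Y, ?_, ?_, ?_⟩
  · rw [reindex_apply, reindex_apply, submatrix_mul_equiv, ← hXY, submatrix_submatrix]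
    simp
  · rw [charpoly_reindex, hX]
    exact Equiv.prod_comp e fun i ↦ Polynomial.X - C (β i)
  · rw [charpoly_reindex, hY]
    exact Equiv.prod_comp e fun i ↦ Polynomial.X - C (γ i)

theorem of_subsingleton [Subsingleton ι] {A : Matrix ι ι F} {β γ : ι → F}
    (hdet : A.det = ∏ i, β i * γ i) : FactorsWithSpectra A β γ := by
  refine ⟨diagonal β, diagonal γ, ?_, charpoly_diagonal β, charpoly_diagonal γ⟩
  ext i j
  have := uniqueOfSubsingleton i
  obtain rfl := Subsingleton.elim i j
  rw [det_eq_elem_of_subsingleton A i, Fintype.prod_subsingleton _ i] at hdet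
  simpa using hdet

theorem of_fromBlocks_diagonal {r : Matrix μ κ F} {c : Matrix κ μ F} {D : Matrix κ κ F}
    {β γ : μ ⊕ κ → F} {d : μ → F} (hd : ∀ i, d i ≠ 0) (hβγ : ∀ i, d i = β (.inl i) * γ (.inl i))
    (h : FactorsWithSpectra (D - c * diagonal d⁻¹ * r) (β ∘ .inr) (γ ∘ .inr)) :
    FactorsWithSpectra (fromBlocks (diagonal d) r c D) β γ := by
  obtain ⟨X, Y, hXY, hX, hY⟩ := h
  have hβ (i : μ) : β (.inl i) ≠ 0 := left_ne_zero_of_mul (hβγ i ▸ hd i)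
  have hγ (i : μ) : γ (.inl i) ≠ 0 := right_ne_zero_of_mul (hβγ i ▸ hd i)
  obtain rfl : d = fun i ↦ β (.inl i) * γ (.inl i) := funext hβγ
  refine ⟨fromBlocks (diagonal (β ∘ .inl)) 0 (c * diagonal fun i ↦ (γ (.inl i))⁻¹) X,
    fromBlocks (diagonal (γ ∘ .inl)) (diagonal (fun i ↦ (β (.inl i))⁻¹) * r) 0 Y, ?_, ?_, ?_⟩
  · rw [fromBlocks_multiply, ← hXY]
    congr 1
    · simp
    · simp [← Matrix.mul_assoc, hβ]
    · simp [Matrix.mul_assoc, hγ]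
    · simp [Matrix.mul_assoc, ← Matrix.mul_assoc (diagonal _) (diagonal _), Pi.inv_def]
  · rw [charpoly_fromBlocks_zero₁₂, charpoly_diagonal, hX, Fintype.prod_sum_type]
    rfl
  · rw [charpoly_fromBlocks_zero₂₁, charpoly_diagonal, hY, Fintype.prod_sum_type]
    rfl

theorem of_shearedSchur {a : Matrix μ μ F} {r : Matrix μ κ F} {c : Matrix κ μ F}
    {D : Matrix κ κ F} {β γ : μ ⊕ κ → F} {d : μ → F} (hd : ∀ i, d i ≠ 0)
    (hβγ : ∀ i, d i = β (.inl i) * γ (.inl i)) {g : Matrix μ κ F} (hg : a + g * c = diagonal d)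
    (h : FactorsWithSpectra (shearedSchur d r c D g) (β ∘ .inr) (γ ∘ .inr)) :
    FactorsWithSpectra (fromBlocks a r c D) β γ := by
  have hconj : (shear g).val * fromBlocks a r c D * (shear g)⁻¹.val =
      fromBlocks (diagonal d) (r + g * D - diagonal d * g) c (D - c * g) := by
    rw [shear, Units.inv_mk]
    simp [fromBlocks_multiply, hg, neg_add_eq_sub]
  have hschur : D - c * g - c * diagonal d⁻¹ * (r + g * D - diagonal d * g) =
      shearedSchur d r c D g := by
    have hdd : diagonal d⁻¹ * diagonal d = 1 := by simp [hd]
    have hcancel : c * diagonal d⁻¹ * (diagonal d * g) = c * g := by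
      rw [Matrix.mul_assoc, ← Matrix.mul_assoc (diagonal d⁻¹), hdd, Matrix.one_mul]
    rw [Matrix.mul_sub, hcancel, shearedSchur]
    abel
  refine of_conj (shear g) ?_
  rw [hconj]
  exact of_fromBlocks_diagonal hd hβγ (hschur ▸ h)

theorem exists_subtype_ne_reduction {A : Matrix ι ι F} {β γ : ι → F} (hA : A.det ≠ 0)
    (hdet : A.det = ∏ i, β i * γ i) {i j : ι} (hij : i ≠ j) (hAij : A i j ≠ 0) :
    ∃ S : Matrix {k // k ≠ j} {k // k ≠ j} F,
      S.det ≠ 0 ∧ S.det = ∏ k : {k // k ≠ j}, β k.val * γ k.val ∧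
      (Nontrivial {k // k ≠ j} → S ∉ Set.range (scalar {k // k ≠ j})) ∧
      (FactorsWithSpectra S (β ∘ Subtype.val) (γ ∘ Subtype.val) → FactorsWithSpectra A β γ) := by
  let e : {k // k = j} ⊕ {k // k ≠ j} ≃ ι := Equiv.sumCompl (· = j)
  let B := A.submatrix e e
  have hB : fromBlocks B.toBlocks₁₁ B.toBlocks₁₂ B.toBlocks₂₁ B.toBlocks₂₂ = B :=
    fromBlocks_toBlocks B
  have hBdet : B.det = A.det := det_submatrix_equiv_self e A
  have hc : B.toBlocks₂₁ ≠ 0 := fun h ↦ hAij (congrFun₂ h ⟨i, hij⟩ ⟨j, rfl⟩)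
  have hne (k : ι) : β k * γ k ≠ 0 :=
    Finset.prod_ne_zero_iff.mp (hdet ▸ hA) k (Finset.mem_univ k)
  obtain ⟨g, hg, hS⟩ := exists_shearedSchur_notMem_range_scalar (hB ▸ hBdet ▸ hA) hc
    (d := fun k : {k // k = j} ↦ β k.val * γ k.val) fun k ↦ hne k.val
  have hmul := det_fromBlocks_eq_mul_det_shearedSchur (r := B.toBlocks₁₂) (D := B.toBlocks₂₂)
    (fun k ↦ hne k.val) hg
  rw [hB, hBdet] at hmul
  refine ⟨_, right_ne_zero_of_mul (hmul ▸ hA), ?_, hS, fun h ↦ ?_⟩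
  · have hprod : A.det = (∏ k : {k // k = j}, β k.val * γ k.val) *
        ∏ k : {k // k ≠ j}, β k.val * γ k.val := by
      rw [hdet, ← e.prod_comp, Fintype.prod_sum_type]
      rfl
    exact mul_left_cancel₀ (left_ne_zero_of_mul (hmul ▸ hA)) (hmul.symm.trans hprod)
  · refine of_submatrix e ?_
    change FactorsWithSpectra B _ _
    rw [← hB]
    exact of_shearedSchur (fun k ↦ hne k.val) (fun _ ↦ rfl) hg h

end FactorsWithSpectra

theorem exists_units_conj_apply_ne_zero {R : Type*} [CommRing R] {A : Matrix ι ι R}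
    (hA : A ∉ Set.range (scalar ι)) :
    ∃ P : (Matrix ι ι R)ˣ, ∃ i j, i ≠ j ∧ (P.val * A * P⁻¹.val) i j ≠ 0 := by
  by_cases hoff : ∃ i j, i ≠ j ∧ A i j ≠ 0
  · exact ⟨1, by simpa using hoff⟩
  push Not at hoff
  have hdiag : diagonal A.diag = A := isDiag_iff_diagonal_diag A |>.mp fun i j ↦ hoff i j
  obtain ⟨i, j, hij⟩ : ∃ i j, A i i ≠ A j j := by
    by_contra! h
    rcases isEmpty_or_nonempty ι with hι | ⟨⟨k⟩⟩
    · exact hA ⟨0, Subsingleton.elim _ _⟩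
    · refine hA ⟨A k k, ?_⟩
      rw [← hdiag, scalar_apply]
      congr 1
      ext l
      simp [h k l]
  have hne : i ≠ j := fun h ↦ hij (h ▸ rfl)
  refine ⟨⟨transvection i j 1, transvection i j (-1), ?_, ?_⟩, i, j, hne, ?_⟩
  · simp [transvection_mul_transvection_same, hne]
  · simp [transvection_mul_transvection_same, hne]
  · have hentry : (transvection i j 1 * A * transvection i j (-1) : Matrix ι ι R) i j =
        A j j - A i i := by
      simp only [mul_transvection_apply_same, transvection_mul_apply_same, hoff i j hne,
        hoff j i hne.symm]
      ring
    rw [Units.inv_mk, hentry]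
    exact sub_ne_zero.mpr hij.symm

theorem factorsWithSpectra_of_notMem_range_scalar {A : Matrix ι ι F} {β γ : ι → F}
    (hA : Nontrivial ι → A ∉ Set.range (scalar ι)) (hA₀ : A.det ≠ 0)
    (hdet : A.det = ∏ i, β i * γ i) : FactorsWithSpectra A β γ := by
  induction hn : Fintype.card ι using Nat.strong_induction_on generalizing ι with | _ n ih
  rcases subsingleton_or_nontrivial ι with hι | hι
  · exact .of_subsingleton hdet
  · obtain ⟨P, i, j, hij, hPA⟩ := exists_units_conj_apply_ne_zero (hA hι)
    have hdetP : (P.val * A * P⁻¹.val).det = A.det := det_units_conj P A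
    obtain ⟨S, hS₀, hSdet, hS, hSA⟩ :=
      FactorsWithSpectra.exists_subtype_ne_reduction (hdetP ▸ hA₀) (hdetP.trans hdet) hij hPA
    have hcard : Fintype.card {k // k ≠ j} < n := hn ▸ Fintype.card_subtype_lt (x := j) (by simp)
    exact .of_conj P (hSA (ih _ hcard hS hS₀ hSdet rfl))

end Factorization

section Powers

variable {F ι : Type*} [Field F] [Fintype ι] [DecidableEq ι]

theorem exists_units_conj_diagonal {X : Matrix ι ι F} {a : ι → F} (ha : Function.Injective a)
    (hX : X.charpoly = ∏ i, (Polynomial.X - C (a i))) :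
    ∃ P : (Matrix ι ι F)ˣ, X = P.val * diagonal a * P⁻¹.val := by
  have hev (i : ι) : ∃ v, Module.End.HasEigenvector (toLin' X) (a i) v := by
    apply Module.End.HasEigenvalue.exists_hasEigenvector
    rw [Module.End.hasEigenvalue_iff_isRoot_charpoly, charpoly_toLin', hX, IsRoot.def, eval_prod]
    exact Finset.prod_eq_zero (Finset.mem_univ i) (by simp)
  choose v hv using hev
  have hP : IsUnit (of v)ᵀ := linearIndependent_cols_iff_isUnit.mp
    (Module.End.eigenvectors_linearIndependent' (toLin' X) a ha v hv)
  have hXP : X * (of v)ᵀ = (of v)ᵀ * diagonal a := by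
    ext p q
    have hvq := congrFun (hv q).apply_eq_smul p
    rw [toLin'_apply, Pi.smul_apply, smul_eq_mul, mul_comm] at hvq
    rw [mul_diagonal]
    exact hvq
  obtain ⟨P, hP⟩ := hP
  exact ⟨P, (Units.eq_mul_inv_iff_mul_eq P).mpr (by rw [hP, hXP])⟩

theorem exists_specialLinearGroup_pow_eq {X : Matrix ι ι F} {b : ι → F} {m : ℕ}
    (hb : ∏ i, b i = 1) (hbm : Function.Injective (b ^ m))
    (hX : X.charpoly = ∏ i, (Polynomial.X - C (b i ^ m))) :
    ∃ x : Matrix.SpecialLinearGroup ι F, (x ^ m : Matrix.SpecialLinearGroup ι F).val = X := by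
  obtain ⟨P, hP⟩ := exists_units_conj_diagonal hbm hX
  let x : Matrix.SpecialLinearGroup ι F :=
    ⟨P.val * diagonal b * P⁻¹.val, by rw [det_units_conj, det_diagonal, hb]⟩
  have hx : x.val = P.val * diagonal b * P⁻¹.val := rfl
  refine ⟨x, ?_⟩
  rw [Matrix.SpecialLinearGroup.coe_pow, hx, Units.conj_pow, diagonal_pow, hP]

theorem specialLinearGroup_exists_eq_pow_mul_pow {b c : ι → F} {m n : ℕ}
    (hb : ∏ i, b i = 1) (hbm : Function.Injective (b ^ m))
    (hc : ∏ i, c i = 1) (hcn : Function.Injective (c ^ n)) {g : Matrix.SpecialLinearGroup ι F}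
    (hg : g ∉ Subgroup.center (Matrix.SpecialLinearGroup ι F)) :
    ∃ x y : Matrix.SpecialLinearGroup ι F, g = x ^ m * y ^ n := by
  have hscalar : g.val ∉ Set.range (scalar ι) := by
    rintro ⟨s, hs⟩
    refine hg (Matrix.SpecialLinearGroup.mem_center_iff.mpr ⟨s, ?_, hs⟩)
    simpa using congrArg det hs
  have hdet : g.val.det = ∏ i, (b ^ m) i * (c ^ n) i := by
    simp [Finset.prod_mul_distrib, Finset.prod_pow, hb, hc]
  obtain ⟨X, Y, hXY, hX, hY⟩ :=
    factorsWithSpectra_of_notMem_range_scalar (fun _ ↦ hscalar) (by simp) hdet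
  obtain ⟨x, rfl⟩ := exists_specialLinearGroup_pow_eq hb hbm hX
  obtain ⟨y, rfl⟩ := exists_specialLinearGroup_pow_eq hc hcn hY
  exact ⟨x, y, Subtype.ext hXY⟩

end Powers

section Eigenvalues

theorem exists_units_forall_pow_ne_one {F : Type*} [Field F] {N : ℕ} (hN : N ≤ ENat.card F) :
    ∃ t : Fˣ, ∀ l, l ≠ 0 → l + 1 < N → t ^ l ≠ 1 := by
  rcases finite_or_infinite F with hF | hF
  · obtain ⟨t, ht⟩ := IsCyclic.exists_generator (α := Fˣ)
    refine ⟨t, fun l hl hlN ↦ pow_ne_one_of_lt_orderOf hl ?_⟩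
    rw [ENat.card_eq_coe_natCard, Nat.cast_le, Nat.card_eq_card_units_add_one] at hN
    rw [orderOf_eq_card_of_forall_mem_zpowers ht]
    omega
  · have := NeZero.mk N.factorial_ne_zero
    have hfin : {t : Fˣ | t ∈ rootsOfUnity N.factorial F}.Finite :=
      inferInstanceAs (Finite (rootsOfUnity N.factorial F))
    obtain ⟨x, hx⟩ := ((hfin.image Units.val).insert 0).exists_notMem
    rw [Set.mem_insert_iff, not_or] at hx
    refine ⟨Units.mk0 x hx.1, fun l hl hlN htl ↦ hx.2 ⟨_, ?_, Units.val_mk0 hx.1⟩⟩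
    rw [Set.mem_ofPred_eq, mem_rootsOfUnity]
    exact orderOf_dvd_iff_pow_eq_one.mp
      ((orderOf_dvd_of_pow_eq_one htl).trans (Nat.dvd_factorial (by omega) (by omega)))

theorem prod_zpow_sub_rev {G : Type*} [CommGroup G] (t : G) (k : ℕ) :
    ∏ i : Fin k, t ^ ((i : ℤ) - i.rev) = 1 := by
  simp_rw [_root_.zpow_sub, Finset.prod_mul_distrib, Finset.prod_inv_distrib]
  exact mul_inv_eq_one.mpr (Equiv.prod_comp Fin.revPerm fun i : Fin k ↦ t ^ (i : ℤ)).symm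

theorem injective_zpow_sub_rev_pow {G : Type*} [Group G] {t : G} {k m : ℕ} (hm : 0 < m)
    (ht : ∀ l, l ≠ 0 → l + 1 < 2 * m * k → t ^ l ≠ 1) :
    Function.Injective fun i : Fin k ↦ (t ^ ((i : ℤ) - i.rev)) ^ m := by
  intro i j hpow
  by_contra hne
  wlog hij : i < j generalizing i j
  · exact this hpow.symm (Ne.symm hne) (lt_of_le_of_ne (not_lt.mp hij) (Ne.symm hne))
  have hexp : ((j : ℤ) - j.rev) * m - ((i : ℤ) - i.rev) * m = (2 * m * (j - i : ℕ) : ℕ) := by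
    have hrev : ((j : ℤ) - j.rev) - (i - i.rev) = 2 * (j - i : ℕ) := by
      rw [Fin.val_rev, Fin.val_rev]
      omega
    rw [← sub_mul, hrev]
    push_cast
    ring
  have hlt : 2 * m * (j - i : ℕ) + 1 < 2 * m * k := by
    have hsucc : (j - i : ℕ) + 1 ≤ k := by omega
    have := Nat.mul_le_mul_left (2 * m) hsucc
    linarith
  refine ht _ (by have := Nat.sub_pos_of_lt hij; positivity) hlt ?_
  rw [← zpow_natCast, ← hexp, _root_.zpow_sub, _root_.zpow_mul, _root_.zpow_mul,
    zpow_natCast, zpow_natCast]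
  exact mul_inv_eq_one.mpr hpow.symm

theorem exists_prod_eq_one_and_injective_pow {F : Type*} (ι : Type*) [Field F] [Fintype ι] {m : ℕ}
    (hm : 0 < m) (hF : (2 * m * Fintype.card ι : ℕ) ≤ ENat.card F) :
    ∃ b : ι → F, ∏ i, b i = 1 ∧ Function.Injective (b ^ m) := by
  obtain ⟨t, ht⟩ := exists_units_forall_pow_ne_one hF
  let u : Fin (Fintype.card ι) → Fˣ := fun i ↦ t ^ ((i : ℤ) - i.rev)
  let e := Fintype.equivFin ι
  refine ⟨fun i ↦ u (e i), ?_, fun i j hij ↦ ?_⟩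
  · rw [← Units.coe_prod, e.prod_comp u, prod_zpow_sub_rev, Units.val_one]
  · exact e.injective (injective_zpow_sub_rev_pow hm ht (Units.ext hij))

end Eigenvalues

theorem sl_power_word_noncentral_general {F ι : Type*} [Field F] [Fintype ι] [DecidableEq ι]
    {m n : ℕ} (hm : 0 < m) (hn : 0 < n)
    (hmF : (2 * m * Fintype.card ι : ℕ) ≤ ENat.card F)
    (hnF : (2 * n * Fintype.card ι : ℕ) ≤ ENat.card F)
    {g : Matrix.SpecialLinearGroup ι F}
    (hg : g ∉ Subgroup.center (Matrix.SpecialLinearGroup ι F)) :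
    ∃ x y : Matrix.SpecialLinearGroup ι F, g = x ^ m * y ^ n := by
  obtain ⟨b, hb, hbm⟩ := exists_prod_eq_one_and_injective_pow ι hm hmF
  obtain ⟨c, hc, hcn⟩ := exists_prod_eq_one_and_injective_pow ι hn hnF
  exact specialLinearGroup_exists_eq_pow_mul_pow hb hbm hc hcn hg

/-- If `F` is an infinite field, `k ≥ 2`, and `m, n` are positive integers, then every noncentral
element of `SL_k(F)` is of the form `x^m * y^n`. -/
theorem sl_power_word_noncentral {F : Type*} [Field F] [Infinite F]
    (k : ℕ) (hk : 2 ≤ k) (m n : ℕ) (hm : 0 < m) (hn : 0 < n) :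
    ∀ g : Matrix.SpecialLinearGroup (Fin k) F,
      g ∉ Subgroup.center (Matrix.SpecialLinearGroup (Fin k) F) →
      ∃ x y : Matrix.SpecialLinearGroup (Fin k) F, g = x ^ m * y ^ n := by
  intro g hg
  exact sl_power_word_noncentral_general hm hn (by simp) (by simp) hg
end

section
/- Let F be an infinite field and let k ≥ 2 be an integer. Then every element g of SL_k(F) is a product of two squares: there exist x, y ∈ SL_k(F) with g = x²y². -/
/-!
By Sourour's factorization theorem, an invertible matrix `A` that is not scalar is a product of two
matrices with arbitrarily prescribed nonzero eigenvalues `β` and `γ`, as long as the product of all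
of these is `det A`: up to conjugation `A` has any prescribed nonzero corner, in particular
`β 0 * γ 0`, and a Schur complement that is again not scalar, which is factored inductively.
If `det A = 1`, take for both `β` and `γ` the squares of some `b` with `∏ b = 1`. When these squares
are distinct, both factors are diagonalizable, hence squares of matrices with eigenvalues `b`.

A scalar matrix in the special linear group is a square if it has odd multiplicative order or odd
size; otherwise it is assembled from `2 × 2` blocks.
-/

open Matrix Polynomial Cardinal

lemma reindex_scalar {R n m : Type*} [CommRing R] [Fintype n] [DecidableEq n] [Fintype m]
    [DecidableEq m] (e : n ≃ m) (u : R) : reindex e e (scalar n u) = scalar m u := by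
  rw [scalar_apply, scalar_apply, reindex_apply, submatrix_diagonal_equiv]
  rfl

section Bordered

variable {F m : Type*} [Field F]

lemma exists_ne_zero_of_col_ne_zero {c : Matrix m Unit F} (hc : c ≠ 0) : ∃ i, c i () ≠ 0 := by
  by_contra! h
  exact hc (ext fun i _ ↦ h i)

/-- The block matrix with corner `a`, first row `r`, first column `c` and Schur complement `S`
with respect to the corner. -/
def bordered (a : F) (r : Matrix Unit m F) (c : Matrix m Unit F) (S : Matrix m m F) :
    Matrix (Unit ⊕ m) (Unit ⊕ m) F :=
  fromBlocks (a • 1) r c (S + a⁻¹ • (c * r))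

lemma bordered_sub (a : F) (r : Matrix Unit m F) (c : Matrix m Unit F) (d : Matrix m m F) :
    bordered a r c (d - a⁻¹ • (c * r)) = fromBlocks (a • 1) r c d := by
  rw [bordered, sub_add_cancel]

variable [Fintype m]

lemma bordered_mul {β γ : F} (hβ : β ≠ 0) (hγ : γ ≠ 0) (r : Matrix Unit m F) (c : Matrix m Unit F)
    (B D : Matrix m m F) :
    bordered (β * γ) r c (B * D) =
      fromBlocks (β • 1) 0 (γ⁻¹ • c) B * fromBlocks (γ • 1) (β⁻¹ • r) 0 D := by
  simp [bordered, fromBlocks_multiply, smul_smul, hβ, hγ, mul_comm, add_comm]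

lemma exists_row_mul_col_eq {c : Matrix m Unit F} (hc : c ≠ 0) (a : Matrix Unit Unit F) :
    ∃ f : Matrix Unit m F, f * c = a := by
  classical
  obtain ⟨i, hi⟩ := exists_ne_zero_of_col_ne_zero hc
  refine ⟨Matrix.single () i (a () () / c i ()), ext fun _ _ ↦ ?_⟩
  simp [hi]

lemma exists_row_ne_zero_mul_col_eq_zero [Nontrivial m] {c : Matrix m Unit F} (hc : c ≠ 0) :
    ∃ f : Matrix Unit m F, f ≠ 0 ∧ f * c = 0 := by
  classical
  obtain ⟨i, hi⟩ := exists_ne_zero_of_col_ne_zero hc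
  obtain ⟨j, hj⟩ := exists_ne i
  refine ⟨Matrix.single () j (c i ()) - Matrix.single () i (c j ()), fun h ↦ hi ?_,
    ext fun _ _ ↦ ?_⟩
  · simpa [hj, hj.symm] using congrFun₂ h () j
  · simp [Matrix.sub_mul, mul_comm]

variable [DecidableEq m]

lemma exists_linearIndependent_pair_mulVec {A : Matrix m m F} (hA : A ∉ Set.range (scalar m)) :
    ∃ v, LinearIndependent F ![v, A *ᵥ v] := by
  by_contra! h
  obtain ⟨a, ha⟩ := (toLin' A).exists_eq_smul_id_of_forall_notLinearIndependent h
  refine hA ⟨a, (toLin' (R := F)).injective ?_⟩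
  rw [ha, scalar_apply, ← smul_one_eq_diagonal, map_smul, toLin'_one]
  rfl

lemma exists_isConj_toBlocks₂₁_ne_zero {A : Matrix (Unit ⊕ m) (Unit ⊕ m) F}
    (hA : A ∉ Set.range (scalar (Unit ⊕ m))) : ∃ M, IsConj A M ∧ M.toBlocks₂₁ ≠ 0 := by
  obtain ⟨v, hv⟩ := exists_linearIndependent_pair_mulVec hA
  have hv₀ : v ≠ 0 := hv.ne_zero 0
  let e : Unit ⊕ m → F := Pi.single (Sum.inl ()) 1
  have he : e ≠ 0 := by simp [e]
  obtain ⟨g, hg⟩ := MulAction.exists_smul_eq (SpecialLinearGroup (Unit ⊕ m) F)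
    (Projectivization.mk F v hv₀) (Projectivization.mk F e he)
  obtain ⟨t, ht : t • e = g.1 *ᵥ v⟩ := (Projectivization.mk_eq_mk_iff' _ _ _ _ _).1 hg
  let M := g.1 * A * g⁻¹.1
  have hM : g.1 * A = M * g.1 := by
    rw [mul_assoc, show g⁻¹.1 * g.1 = 1 from congrArg Subtype.val (inv_mul_cancel g), mul_one]
  refine ⟨M, ⟨SpecialLinearGroup.toGL g, hM⟩, fun hc ↦ ?_⟩
  have hμ : M *ᵥ e = M (Sum.inl ()) (Sum.inl ()) • e := by
    rw [mulVec_single_one]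
    ext (i | i)
    · simp [e]
    · exact (congrFun₂ hc i ()).trans (by simp [e])
  refine (LinearIndependent.pair_iff' hv₀).1 hv (M (Sum.inl ()) (Sum.inl ())) ?_
  have hg_inj : Function.Injective (g.1 *ᵥ ·) :=
    mulVec_injective_of_isUnit (SpecialLinearGroup.toGL g).isUnit
  refine hg_inj ?_
  simp only [mulVec_smul, ← ht, mulVec_mulVec, hM, ← mulVec_mulVec _ M, hμ]
  exact smul_comm _ _ _

lemma isConj_fromBlocks_shear {R l : Type*} [CommRing R] [Fintype l] [DecidableEq l]
    (a : Matrix l l R) (r : Matrix l m R) (c : Matrix m l R) (d : Matrix m m R)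
    (f : Matrix l m R) :
    IsConj (fromBlocks a r c d)
      (fromBlocks (a - f * c) (r + a * f - f * (d + c * f)) c (d + c * f)) := by
  let P : (Matrix (l ⊕ m) (l ⊕ m) R)ˣ :=
    ⟨fromBlocks 1 (-f) 0 1, fromBlocks 1 f 0 1, by simp [fromBlocks_multiply],
      by simp [fromBlocks_multiply]⟩
  refine ⟨P, ?_⟩
  simp only [SemiconjBy, P, fromBlocks_multiply]
  congr 1 <;> simp [Matrix.mul_add, Matrix.sub_mul, Matrix.mul_assoc] <;> abel

lemma col_mul_row_notMem_range_scalar {c : Matrix m Unit F} {f : Matrix Unit m F}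
    (hc : c ≠ 0) (hf : f ≠ 0) (hfc : f * c = 0) : c * f ∉ Set.range (scalar m) := by
  rintro ⟨t, ht⟩
  have htc : scalar m t * c = 0 := by rw [ht, Matrix.mul_assoc, hfc, Matrix.mul_zero]
  obtain ⟨i, hi⟩ := exists_ne_zero_of_col_ne_zero hc
  have ht₀ : t = 0 := by simpa [hi] using congrFun₂ htc i ()
  refine hf (ext fun _ j ↦ ?_)
  have hij : (c * f) i j = 0 := by rw [← ht, ht₀, map_zero, Matrix.zero_apply]
  simpa [Matrix.mul_apply, hi] using hij

lemma det_eq_of_isConj {R : Type*} [CommRing R] {A B : Matrix m m R} (h : IsConj A B) :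
    A.det = B.det :=
  isConj_iff_eq.1 (detMonoidHom.map_isConj h)

lemma det_bordered {a : F} (ha : a ≠ 0) (r : Matrix Unit m F) (c : Matrix m Unit F)
    (S : Matrix m m F) : (bordered a r c S).det = a * S.det := by
  have h := bordered_mul one_ne_zero ha r c 1 S
  rw [one_mul, Matrix.one_mul] at h
  rw [h, det_mul, det_fromBlocks_zero₁₂, det_fromBlocks_zero₂₁]
  simp

lemma isConj_bordered_shear {a : F} (ha : a ≠ 0) {r f : Matrix Unit m F} {c : Matrix m Unit F}
    (hfc : f * c = 0) (S : Matrix m m F) :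
    IsConj (bordered a r c S) (bordered a (r + a • f - f * S) c (S + a⁻¹ • (c * f * S))) := by
  have hfc' (M : Matrix Unit m F) : f * (c * M) = 0 := by
    rw [← Matrix.mul_assoc, hfc, Matrix.zero_mul]
  unfold bordered
  convert isConj_fromBlocks_shear (a • 1) r c (S + a⁻¹ • (c * r)) f using 2
  · simp [hfc]
  · simp [Matrix.mul_add, hfc']
  · simp only [Matrix.mul_add, Matrix.mul_sub, Matrix.mul_assoc, Matrix.mul_smul, smul_add,
      smul_sub, inv_smul_smul₀ ha]
    abel

lemma exists_isConj_bordered_col_ne_zero {A : Matrix (Unit ⊕ m) (Unit ⊕ m) F}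
    (hA : A ∉ Set.range (scalar (Unit ⊕ m))) (a : F) :
    ∃ r c S, IsConj A (bordered a r c S) ∧ c ≠ 0 := by
  obtain ⟨M, hAM, hc⟩ := exists_isConj_toBlocks₂₁_ne_zero hA
  obtain ⟨f, hf⟩ := exists_row_mul_col_eq hc (M.toBlocks₁₁ - a • 1)
  have hM := isConj_fromBlocks_shear M.toBlocks₁₁ M.toBlocks₁₂ M.toBlocks₂₁ M.toBlocks₂₂ f
  rw [hf, sub_sub_cancel, fromBlocks_toBlocks, ← bordered_sub] at hM
  exact ⟨_, _, _, hAM.trans hM, hc⟩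

lemma exists_isConj_bordered {A : Matrix (Unit ⊕ m) (Unit ⊕ m) F}
    (hA : A ∉ Set.range (scalar (Unit ⊕ m))) (hdet : A.det ≠ 0) {a : F} (ha : a ≠ 0) :
    ∃ r c S, IsConj A (bordered a r c S) ∧ (Nontrivial m → S ∉ Set.range (scalar m)) := by
  obtain ⟨r, c, S, hAS, hc⟩ := exists_isConj_bordered_col_ne_zero hA a
  by_cases hS : Nontrivial m → S ∉ Set.range (scalar m)
  · exact ⟨r, c, S, hAS, hS⟩
  push Not at hS
  obtain ⟨hm, s, rfl⟩ := hS
  have hs : s ≠ 0 := by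
    rintro rfl
    rw [det_eq_of_isConj hAS, det_bordered ha, map_zero, det_zero, mul_zero] at hdet
    exact hdet rfl
  -- Since `f * c = 0`, shearing by `f` alters the Schur complement by a nilpotent, nonzero matrix.
  obtain ⟨f, hf, hfc⟩ := exists_row_ne_zero_mul_col_eq_zero hc
  refine ⟨_, c, _, hAS.trans (isConj_bordered_shear ha hfc _), fun _ ⟨t, ht⟩ ↦ ?_⟩
  refine col_mul_row_notMem_range_scalar hc hf hfc ⟨a * s⁻¹ * (t - s), ?_⟩
  have hcf : scalar m (t - s) = (a⁻¹ * s) • (c * f) := by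
    rw [map_sub, ht, add_sub_cancel_left, mul_smul, scalar_apply, ← smul_one_eq_diagonal,
      Matrix.mul_smul, Matrix.mul_one]
  rw [map_mul, hcf, scalar_apply, ← smul_one_eq_diagonal, smul_mul_smul_comm, Matrix.one_mul]
  field_simp
  rw [one_smul]

end Bordered

section SpectralFactorization

variable {F m n : Type*} [Field F] [Fintype m] [DecidableEq m] [Fintype n] [DecidableEq n]

/-- `A` is a product of a matrix with eigenvalues `β` and a matrix with eigenvalues `γ`, both
listed with multiplicity. -/
def HasSpectralFactorization (A : Matrix n n F) (β γ : n → F) : Prop :=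
  ∃ B D : Matrix n n F, A = B * D ∧
    B.charpoly = ∏ i, (X - C (β i)) ∧ D.charpoly = ∏ i, (X - C (γ i))

namespace HasSpectralFactorization

variable {β γ : n → F}

lemma of_isConj {A M : Matrix n n F} (hAM : IsConj A M)
    (hA : HasSpectralFactorization A β γ) : HasSpectralFactorization M β γ := by
  obtain ⟨B, D, rfl, hB, hD⟩ := hA
  obtain ⟨P, hP⟩ := hAM
  refine ⟨P.val * B * P.val⁻¹, P.val * D * P.val⁻¹, ?_, ?_, ?_⟩
  · rw [← coe_units_inv, mul_assoc _ D, mul_assoc (P.val * B), P.inv_mul_cancel_left, ← mul_assoc,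
      mul_assoc P.val, hP.eq, P.mul_inv_cancel_right]
  · rw [charpoly_units_conj, hB]
  · rw [charpoly_units_conj, hD]

lemma of_reindex (e : n ≃ m) {A : Matrix n n F}
    (hA : HasSpectralFactorization (reindex e e A) (β ∘ e.symm) (γ ∘ e.symm)) :
    HasSpectralFactorization A β γ := by
  obtain ⟨B, D, hBD, hB, hD⟩ := hA
  refine ⟨reindex e.symm e.symm B, reindex e.symm e.symm D, ?_, ?_, ?_⟩
  · rw [reindex_apply, reindex_apply, submatrix_mul_equiv, ← hBD]
    simp
  · rw [charpoly_reindex, hB]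
    exact e.symm.prod_comp fun i ↦ X - C (β i)
  · rw [charpoly_reindex, hD]
    exact e.symm.prod_comp fun i ↦ X - C (γ i)

lemma of_subsingleton [Subsingleton n] {A : Matrix n n F} (hA : A.det = (∏ i, β i) * ∏ i, γ i) :
    HasSpectralFactorization A β γ := by
  refine ⟨diagonal β, diagonal γ, ?_, charpoly_diagonal β, charpoly_diagonal γ⟩
  rw [diagonal_mul_diagonal]
  ext i j
  obtain rfl := Subsingleton.elim i j
  rw [det_eq_elem_of_subsingleton A i, Fintype.prod_subsingleton β i,
    Fintype.prod_subsingleton γ i] at hA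
  rw [hA, diagonal_apply_eq]

lemma of_bordered {β γ : Unit ⊕ m → F} (r : Matrix Unit m F) (c : Matrix m Unit F)
    {S : Matrix m m F} (hβ : β (.inl ()) ≠ 0) (hγ : γ (.inl ()) ≠ 0)
    (hS : HasSpectralFactorization S (β ∘ .inr) (γ ∘ .inr)) :
    HasSpectralFactorization (bordered (β (.inl ()) * γ (.inl ())) r c S) β γ := by
  obtain ⟨B, D, rfl, hB, hD⟩ := hS
  refine ⟨_, _, bordered_mul hβ hγ r c B D, ?_, ?_⟩
  · rw [charpoly_fromBlocks_zero₁₂, hB, Fintype.prod_sum_type]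
    simp [smul_one_eq_diagonal, charpoly_diagonal]
  · rw [charpoly_fromBlocks_zero₂₁, hD, Fintype.prod_sum_type]
    simp [smul_one_eq_diagonal, charpoly_diagonal]

lemma of_notMem_range_scalar {A : Matrix (Unit ⊕ m) (Unit ⊕ m) F} {β γ : Unit ⊕ m → F}
    (hA : A ∉ Set.range (scalar (Unit ⊕ m))) (hβ : ∀ i, β i ≠ 0) (hγ : ∀ i, γ i ≠ 0)
    (hdet : A.det = (∏ i, β i) * ∏ i, γ i)
    (ih : ∀ S : Matrix m m F, (Nontrivial m → S ∉ Set.range (scalar m)) →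
      S.det = (∏ i, β (.inr i)) * ∏ i, γ (.inr i) →
      HasSpectralFactorization S (β ∘ .inr) (γ ∘ .inr)) :
    HasSpectralFactorization A β γ := by
  have ha : β (.inl ()) * γ (.inl ()) ≠ 0 := mul_ne_zero (hβ _) (hγ _)
  have hdet₀ : A.det ≠ 0 := by
    rw [hdet]
    exact mul_ne_zero (Finset.prod_ne_zero_iff.2 fun i _ ↦ hβ i)
      (Finset.prod_ne_zero_iff.2 fun i _ ↦ hγ i)
  obtain ⟨r, c, S, hAS, hS⟩ := exists_isConj_bordered hA hdet₀ ha
  refine of_isConj hAS.symm (of_bordered r c (hβ _) (hγ _) (ih S hS (mul_left_cancel₀ ha ?_)))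
  rw [← det_bordered ha r c, ← det_eq_of_isConj hAS, hdet]
  simp only [Fintype.prod_sum_type, Finset.univ_unique, Finset.prod_singleton]
  exact mul_mul_mul_comm _ _ _ _

end HasSpectralFactorization

theorem hasSpectralFactorization_of_det_eq {A : Matrix n n F} {β γ : n → F}
    (hA : Nontrivial n → A ∉ Set.range (scalar n)) (hβ : ∀ i, β i ≠ 0) (hγ : ∀ i, γ i ≠ 0)
    (hdet : A.det = (∏ i, β i) * ∏ i, γ i) : HasSpectralFactorization A β γ := by
  induction hk : Fintype.card n generalizing n with
  | zero =>
    have := Fintype.card_eq_zero_iff.1 hk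
    exact .of_subsingleton hdet
  | succ k ih =>
    rcases subsingleton_or_nontrivial n with _ | hn
    · exact .of_subsingleton hdet
    obtain ⟨i⟩ := hn.to_nonempty
    let e : n ≃ Unit ⊕ {j // j ≠ i} := (Equiv.optionSubtypeNe i).symm.trans
      ((Equiv.optionEquivSumPUnit _).trans (Equiv.sumComm _ _))
    have hcard : Fintype.card {j // j ≠ i} = k := by
      have := Fintype.card_congr e
      rw [Fintype.card_sum, Fintype.card_unit, hk] at this
      omega
    refine .of_reindex e (.of_notMem_range_scalar ?_ (fun _ ↦ hβ _) (fun _ ↦ hγ _) ?_ ?_)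
    · rintro ⟨t, ht⟩
      refine hA hn ⟨t, (reindex e e).injective ?_⟩
      rw [reindex_scalar, ht]
    · rw [det_reindex_self, hdet]
      exact congrArg₂ _ (e.symm.prod_comp β).symm (e.symm.prod_comp γ).symm
    · exact fun S hS hdetS ↦ ih hS (fun _ ↦ hβ _) (fun _ ↦ hγ _) hdetS hcard

end SpectralFactorization

section SquareRoot

variable {F n : Type*} [Field F] [Fintype n] [DecidableEq n]

lemma isConj_diagonal_of_charpoly_eq {B : Matrix n n F} {d : n → F} (hd : Function.Injective d)
    (hB : B.charpoly = ∏ i, (X - C (d i))) : IsConj (diagonal d) B := by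
  have hroot (i : n) : Module.End.HasEigenvalue (toLin' B) (d i) := by
    rw [Module.End.hasEigenvalue_iff_isRoot_charpoly, charpoly_toLin', hB, IsRoot.def, eval_prod]
    exact Finset.prod_eq_zero (Finset.mem_univ i) (by simp)
  choose v hv using fun i ↦ (hroot i).exists_hasEigenvector
  have hP : IsUnit (of v)ᵀ :=
    linearIndependent_cols_iff_isUnit.1 (Module.End.eigenvectors_linearIndependent' _ d hd v hv)
  refine ⟨hP.unit, ext fun i j ↦ ?_⟩
  have hij : ∑ k, B i k * v j k = d j * v j i := congrFun (hv j).apply_eq_smul i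
  rw [hP.unit_spec, mul_diagonal, mul_apply]
  simpa [mul_comm] using hij.symm

lemma exists_sq_eq_of_charpoly_eq {B : Matrix n n F} {b : n → F} (hb : Function.Injective (b ^ 2))
    (hB : B.charpoly = ∏ i, (X - C (b i ^ 2))) : ∃ Y, Y ^ 2 = B ∧ Y.det = ∏ i, b i := by
  obtain ⟨P, hP⟩ := isConj_diagonal_of_charpoly_eq hb hB
  refine ⟨P * diagonal b * P⁻¹.val, ?_, ?_⟩
  · rw [Units.conj_pow P, diagonal_pow, hP.eq, P.mul_inv_cancel_right]
  · rw [det_units_conj, det_diagonal]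

end SquareRoot

section Roots

variable {F : Type*} [Field F]

lemma exists_ne_zero_forall_pow_ne {ι : Type*} [Fintype ι] {k : ι → ℕ} (hk : ∀ i, k i ≠ 0)
    (hF : ((∑ i, k i) + 1 : ℕ) < #F) (a : ι → F) : ∃ t : F, t ≠ 0 ∧ ∀ i, t ^ k i ≠ a i := by
  let P : F[X] := X * ∏ i, (X ^ k i - C (a i))
  have hprod : (∏ i, (X ^ k i - C (a i))).Monic :=
    monic_prod_of_monic _ _ fun i _ ↦ monic_X_pow_sub_C _ (hk i)
  have hdeg : P.natDegree = (∑ i, k i) + 1 := by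
    rw [natDegree_X_mul hprod.ne_zero,
      natDegree_prod_of_monic _ _ fun i _ ↦ monic_X_pow_sub_C _ (hk i)]
    simp only [natDegree_X_pow_sub_C]
  obtain ⟨t, ht⟩ := P.exists_eval_ne_zero_of_natDegree_lt_card (monic_X.mul hprod).ne_zero
    (hdeg ▸ hF)
  rw [eval_mul, eval_X, eval_prod, mul_ne_zero_iff, Finset.prod_ne_zero_iff] at ht
  refine ⟨t, ht.1, fun i h ↦ ht.2 i (Finset.mem_univ i) ?_⟩
  simp [h]

lemma injective_cons_sq_iff {m : ℕ} {t : F} {b : Fin m → F} :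
    Function.Injective ((Fin.cons t b : Fin (m + 1) → F) ^ 2) ↔
      (∀ i, t ^ 2 ≠ b i ^ 2) ∧ Function.Injective (b ^ 2) := by
  have hcons : (Fin.cons t b : Fin (m + 1) → F) ^ 2 = Fin.cons (t ^ 2) (b ^ 2) :=
    funext (Fin.cases rfl fun _ ↦ rfl)
  rw [hcons, Fin.cons_injective_iff]
  simp [Set.mem_range, eq_comm]

lemma exists_fin_injective_sq (m : ℕ) (hF : (2 * m : ℕ) ≤ #F) :
    ∃ b : Fin m → F, (∀ i, b i ≠ 0) ∧ Function.Injective (b ^ 2) := by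
  induction m with
  | zero => exact ⟨Fin.elim0, fun i ↦ i.elim0, fun i ↦ i.elim0⟩
  | succ m ih =>
    obtain ⟨b, hb₀, hb⟩ := ih ((Nat.cast_le.2 (by omega)).trans hF)
    obtain ⟨t, ht₀, ht⟩ := exists_ne_zero_forall_pow_ne (k := fun _ ↦ 2) (fun _ ↦ two_ne_zero)
      ((Nat.cast_lt.2 (by simp; omega)).trans_le hF) (b ^ 2)
    exact ⟨Fin.cons t b, Fin.cases ht₀ hb₀, injective_cons_sq_iff.2 ⟨ht, hb⟩⟩

lemma exists_injective_sq_prod_eq_one {n : Type*} [Fintype n] [Nontrivial n]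
    (hF : (4 * Fintype.card n : ℕ) ≤ #F) :
    ∃ b : n → F, (∀ i, b i ≠ 0) ∧ Function.Injective (b ^ 2) ∧ ∏ i, b i = 1 := by
  obtain ⟨m, hm⟩ := Nat.exists_eq_add_of_le' (Fintype.one_lt_card (α := n))
  rw [hm] at hF
  obtain ⟨b, hb₀, hb⟩ := exists_fin_injective_sq (F := F) m
    ((Nat.cast_le.2 (by omega)).trans hF)
  let q := ∏ i, b i
  have hq : q ≠ 0 := Finset.prod_ne_zero_iff.2 fun i _ ↦ hb₀ i
  obtain ⟨t, ht₀, ht⟩ := exists_ne_zero_forall_pow_ne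
    (k := Sum.elim (fun _ : Unit ↦ 4) (fun _ : Fin m ⊕ Fin m ↦ 2)) (by rintro (_ | _) <;> simp)
    ((Nat.cast_lt.2 (by simp; omega)).trans_le hF)
    (Sum.elim (fun _ ↦ q⁻¹ ^ 2) (Sum.elim (b ^ 2) fun i ↦ (q * b i)⁻¹ ^ 2))
  have hts : t ^ 2 ≠ (q * t)⁻¹ ^ 2 := fun h ↦ ht (.inl ()) <| by
    simp only [Sum.elim_inl]
    rw [show t ^ 4 = t ^ 2 * t ^ 2 by ring]
    nth_rw 1 [h]
    field_simp
  have htb (i : Fin m) : t ^ 2 ≠ b i ^ 2 := ht (.inr (.inl i))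
  have hsb (i : Fin m) : (q * t)⁻¹ ^ 2 ≠ b i ^ 2 := fun h ↦ ht (.inr (.inr i)) <| by
    have := hb₀ i
    simp only [Sum.elim_inr]
    field_simp at h ⊢
    linear_combination h.symm
  let c : Fin (m + 2) → F := Fin.cons t (Fin.cons (q * t)⁻¹ b)
  let e : n ≃ Fin (m + 2) := Fintype.equivFinOfCardEq hm
  have hc₀ : ∀ i, c i ≠ 0 := Fin.cases ht₀ (Fin.cases (inv_ne_zero (mul_ne_zero hq ht₀)) hb₀)
  have hc : Function.Injective (c ^ 2) :=
    injective_cons_sq_iff.2 ⟨Fin.cases hts htb, injective_cons_sq_iff.2 ⟨hsb, hb⟩⟩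
  refine ⟨c ∘ e, fun _ ↦ hc₀ _, hc.comp e.injective, ?_⟩
  calc ∏ i, c (e i) = ∏ i, c i := e.prod_comp c
    _ = t * ((q * t)⁻¹ * q) := by simp only [c, Fin.prod_cons, q]
    _ = 1 := by field_simp

end Roots

section Scalar

/-- The matrix `A` is a product of two squares of matrices of determinant one. -/
def IsProductOfTwoSLSquares {R n : Type*} [CommRing R] [Fintype n] [DecidableEq n]
    (A : Matrix n n R) : Prop :=
  ∃ X Y : Matrix n n R, X.det = 1 ∧ Y.det = 1 ∧ A = X ^ 2 * Y ^ 2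

variable {R n m : Type*} [CommRing R] [Fintype n] [DecidableEq n] [Fintype m] [DecidableEq m]

namespace IsProductOfTwoSLSquares

lemma of_reindex (e : n ≃ m) {A : Matrix n n R} (hA : IsProductOfTwoSLSquares (reindex e e A)) :
    IsProductOfTwoSLSquares A := by
  obtain ⟨X, Y, hX, hY, hXY⟩ := hA
  refine ⟨reindexAlgEquiv R R e.symm X, reindexAlgEquiv R R e.symm Y, ?_, ?_, ?_⟩
  · rw [det_reindexAlgEquiv, hX]
  · rw [det_reindexAlgEquiv, hY]
  · rw [← map_pow, ← map_pow, ← map_mul, ← hXY]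
    simp

lemma scalar_prod {u : R} (X Y : m → Matrix n n R) (hX : ∏ i, (X i).det = 1)
    (hY : ∏ i, (Y i).det = 1) (hXY : ∀ i, X i ^ 2 * Y i ^ 2 = scalar n u) :
    IsProductOfTwoSLSquares (scalar (n × m) u) := by
  refine ⟨blockDiagonal X, blockDiagonal Y, ?_, ?_, ?_⟩
  · rw [det_blockDiagonal, hX]
  · rw [det_blockDiagonal, hY]
  · rw [← blockDiagonal_pow, ← blockDiagonal_pow, ← blockDiagonal_mul]
    simp only [Pi.pow_apply, hXY, scalar_apply, blockDiagonal_diagonal]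

lemma scalar_of_pow_eq_one {v : R} (hv : v ^ Fintype.card n = 1) :
    IsProductOfTwoSLSquares (scalar n (v ^ 2)) :=
  ⟨scalar n v, 1, by simp [hv], det_one, by rw [one_pow, mul_one, map_pow]⟩

lemma scalar_of_odd_of_pow_eq_one {u : R} {k : ℕ} (hk : Odd k) (huk : u ^ k = 1)
    (hu : u ^ Fintype.card n = 1) : IsProductOfTwoSLSquares (scalar n u) := by
  obtain ⟨j, rfl⟩ := hk
  have hsq : u = (u ^ (j + 1)) ^ 2 := by
    rw [← pow_mul, show (j + 1) * 2 = (2 * j + 1) + 1 by ring, pow_succ, huk, one_mul]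
  rw [hsq]
  exact scalar_of_pow_eq_one (by rw [← pow_mul, mul_comm, pow_mul, hu, one_pow])

lemma scalar_of_neg_pow_eq_one {u : R} (hu : (-u) ^ Fintype.card m = 1) :
    IsProductOfTwoSLSquares (scalar (Fin 2 × m) u) := by
  refine scalar_prod (fun _ ↦ 1) (fun _ ↦ !![0, u; 1, 0]) (by simp) (by simp [hu]) fun _ ↦ ?_
  ext i j
  fin_cases i <;> fin_cases j <;> simp [sq]

lemma scalar_of_neg_pow_eq_neg_one {u c : R} {m : ℕ} (hu : (-u) ^ (m + 1) = -1) (hc : c ^ 2 = -1) :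
    IsProductOfTwoSLSquares (scalar (Fin 2 × Fin (m + 1)) u) := by
  have hcc : c * c = -1 := by rw [← sq, hc]
  refine scalar_prod (Fin.cons !![c, 0; 0, -c] fun _ ↦ 1)
    (Fin.cons !![0, -u; 1, 0] fun _ ↦ !![0, u; 1, 0]) ?_ ?_ (Fin.cases ?_ fun _ ↦ ?_)
  · simp [Fin.prod_univ_succ, hcc]
  · rw [pow_succ] at hu
    simpa [Fin.prod_univ_succ, mul_comm] using hu
  · ext i j
    fin_cases i <;> fin_cases j <;> simp [sq, hcc]
  · ext i j
    fin_cases i <;> fin_cases j <;> simp [sq]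

lemma scalar_fin_two_prod [IsDomain R] {m : ℕ} {u : R} (hu : u ^ (2 * m) = 1) :
    IsProductOfTwoSLSquares (scalar (Fin 2 × Fin m) u) := by
  have hneg : (-u) ^ m * (-u) ^ m = 1 := by rw [← pow_add, ← two_mul, (even_two_mul m).neg_pow, hu]
  rcases mul_self_eq_one_iff.1 hneg with h | h
  · exact scalar_of_neg_pow_eq_one ((Fintype.card_fin m).symm ▸ h)
  rcases m.even_or_odd' with ⟨j, rfl | rfl⟩
  · rcases j with _ | j
    · exact scalar_of_neg_pow_eq_one (by simp)
    have hc : (u ^ (j + 1)) ^ 2 = -1 := by rw [← h, (even_two_mul _).neg_pow, ← pow_mul, mul_comm]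
    exact scalar_of_neg_pow_eq_neg_one h hc
  · have huj : u ^ (2 * j + 1) = 1 := by rwa [(odd_two_mul_add_one j).neg_pow, neg_inj] at h
    exact scalar_of_odd_of_pow_eq_one (odd_two_mul_add_one j) huj (by simpa using hu)

lemma scalar_of_pow_card_eq_one [IsDomain R] {u : R} (hu : u ^ Fintype.card n = 1) :
    IsProductOfTwoSLSquares (scalar n u) := by
  rcases Nat.even_or_odd' (Fintype.card n) with ⟨m, hn | hn⟩
  · let e : n ≃ Fin 2 × Fin m := Fintype.equivOfCardEq (by simp [hn])
    exact .of_reindex e (reindex_scalar e u ▸ scalar_fin_two_prod (hn ▸ hu))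
  · exact scalar_of_odd_of_pow_eq_one ⟨m, hn⟩ hu hu

end IsProductOfTwoSLSquares

end Scalar

section Main

variable {F n : Type*} [Field F] [Fintype n] [DecidableEq n]

lemma isProductOfTwoSLSquares_of_notMem_range_scalar [Nontrivial n]
    (hF : (4 * Fintype.card n : ℕ) ≤ #F) {A : Matrix n n F} (hA : A ∉ Set.range (scalar n))
    (hdet : A.det = 1) : IsProductOfTwoSLSquares A := by
  obtain ⟨b, hb₀, hb, hb₁⟩ := exists_injective_sq_prod_eq_one hF
  have hb₂ : ∏ i, b i ^ 2 = 1 := by rw [Finset.prod_pow, hb₁, one_pow]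
  obtain ⟨B, D, rfl, hB, hD⟩ : HasSpectralFactorization A (b ^ 2) (b ^ 2) :=
    hasSpectralFactorization_of_det_eq (fun _ ↦ hA) (fun i ↦ pow_ne_zero 2 (hb₀ i))
      (fun i ↦ pow_ne_zero 2 (hb₀ i)) (by simp [hdet, hb₂])
  obtain ⟨X, rfl, hX⟩ := exists_sq_eq_of_charpoly_eq hb hB
  obtain ⟨Y, rfl, hY⟩ := exists_sq_eq_of_charpoly_eq hb hD
  exact ⟨X, Y, hX.trans hb₁, hY.trans hb₁, rfl⟩

theorem sl_product_of_two_squares_general (hF : (4 * Fintype.card n : ℕ) ≤ #F)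
    (g : SpecialLinearGroup n F) : ∃ x y : SpecialLinearGroup n F, g = x ^ 2 * y ^ 2 := by
  rcases subsingleton_or_nontrivial n with _ | _
  · exact ⟨1, 1, Subsingleton.elim _ _⟩
  obtain ⟨X, Y, hX, hY, hXY⟩ : IsProductOfTwoSLSquares g.1 := by
    by_cases hg : g.1 ∈ Set.range (scalar n)
    · obtain ⟨u, hu⟩ := hg
      exact hu ▸ .scalar_of_pow_card_eq_one (by simpa [← hu] using g.2)
    · exact isProductOfTwoSLSquares_of_notMem_range_scalar hF hg g.2
  exact ⟨⟨X, hX⟩, ⟨Y, hY⟩, Subtype.ext hXY⟩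

end Main

/-- If `F` is an infinite field and `k ≥ 2`, then every element of `SL_k(F)` is a product of
two squares. -/
theorem sl_product_of_two_squares {F : Type*} [Field F] [Infinite F] (k : ℕ) (hk : 2 ≤ k) :
    ∀ g : Matrix.SpecialLinearGroup (Fin k) F,
      ∃ x y : Matrix.SpecialLinearGroup (Fin k) F, g = x ^ 2 * y ^ 2 :=
  sl_product_of_two_squares_general (Cardinal.natCast_lt_aleph0.le.trans (Cardinal.aleph0_le_mk F))
end

section
/- Let F be a field, let n ≥ 1 be an integer, and let r ∈ F satisfy r^{2n} = 1. Then the scalar matrix r·I_{2n} lies in SL_{2n}(F) and is a product of two squares: there exist x, y ∈ SL_{2n}(F) with r·I_{2n} = x²y². Moreover, if (−r)^n = 1, then r·I_{2n} = x² for a single element x ∈ SL_{2n}(F). -/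
/-!
The companion matrix of `X ^ 2 - c` squares to `c • 1` and has determinant `-c`. Hence `n` diagonal
copies of the companion matrix of `X ^ 2 - r` form a square root of `r • 1` of determinant
`(-r) ^ n = ±1`. When the sign is `-1`, replacing one copy by the companion matrix of `X ^ 2 + r`
corrects the determinant, and negates the corresponding block of the square. The block `-1` needed
to compensate is the square of the companion matrix of `X ^ 2 + 1`, whose determinant is `1`.
-/

section SqSubCompanion

open Matrix

variable {R : Type*} [CommRing R]

/-- The companion matrix of the polynomial `X ^ 2 - c`, our standard square root of `c • 1`. -/
def sqSubCompanion (c : R) : Matrix (Fin 2) (Fin 2) R :=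
  !![0, c; 1, 0]

lemma det_sqSubCompanion (c : R) : (sqSubCompanion c).det = -c := by
  simp [sqSubCompanion, det_fin_two]

lemma sqSubCompanion_sq (c : R) : sqSubCompanion c ^ 2 = c • 1 := by
  simp [sqSubCompanion, sq, one_fin_two]

end SqSubCompanion

section BlockDiagonalAlgHom

open Matrix

variable {R m o k : Type*} [Fintype m] [DecidableEq m] [Fintype o] [DecidableEq o]
  [Fintype k] [DecidableEq k]

/-- The algebra homomorphism sending a family of square matrices to the block diagonal matrix with
these blocks. The equivalence `e` lets the result be indexed by any type of the right size, such as
`Fin (2 * n)`, instead of a product. -/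
def blockDiagonalAlgHom [CommSemiring R] (e : m × o ≃ k) :
    (o → Matrix m m R) →ₐ[R] Matrix k k R :=
  (reindexAlgEquiv R R e).toAlgHom.comp <|
    AlgHom.mk' (blockDiagonalRingHom m o R) blockDiagonal_smul

lemma det_blockDiagonalAlgHom [CommRing R] (e : m × o ≃ k) (A : o → Matrix m m R) :
    (blockDiagonalAlgHom e A).det = ∏ i, (A i).det :=
  (det_reindex_self e _).trans (det_blockDiagonal A)

/-- The block diagonal matrix with blocks `A i`, as an element of the special linear group; the
indexing by `e` is that of `blockDiagonalAlgHom`. -/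
def specialBlockDiagonal [CommRing R] (e : m × o ≃ k) (A : o → Matrix m m R)
    (hA : ∏ i, (A i).det = 1) : Matrix.SpecialLinearGroup k R :=
  ⟨blockDiagonalAlgHom e A, (det_blockDiagonalAlgHom e A).trans hA⟩

lemma coe_specialBlockDiagonal [CommRing R] (e : m × o ≃ k) (A : o → Matrix m m R)
    (hA : ∏ i, (A i).det = 1) :
    (specialBlockDiagonal e A hA : Matrix k k R) = blockDiagonalAlgHom e A :=
  rfl

end BlockDiagonalAlgHom

section ScalarMatrix

variable {R o k : Type*} [CommRing R] [Fintype o] [Fintype k] [DecidableEq k]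

lemma exists_sq_eq_smul_one (e : Fin 2 × o ≃ k) {r : R} (hr : (-r) ^ Fintype.card o = 1) :
    ∃ x : Matrix.SpecialLinearGroup k R, ((x ^ 2 :) : Matrix k k R) = r • 1 := by
  classical
  let A : o → Matrix (Fin 2) (Fin 2) R := fun _ => sqSubCompanion r
  have hdet : ∏ j, (A j).det = 1 := by
    simp [A, det_sqSubCompanion, hr]
  have hsq : A ^ 2 = r • 1 := funext fun _ => sqSubCompanion_sq r
  refine ⟨specialBlockDiagonal e A hdet, ?_⟩
  rw [Matrix.SpecialLinearGroup.coe_pow, coe_specialBlockDiagonal, ← map_pow, hsq, map_smul,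
    map_one]

lemma exists_sq_mul_sq_eq_smul_one (e : Fin 2 × o ≃ k) (i : o) {r : R}
    (hr : (-r) ^ Fintype.card o = -1) :
    ∃ x y : Matrix.SpecialLinearGroup k R, ((x ^ 2 * y ^ 2 :) : Matrix k k R) = r • 1 := by
  classical
  let s : o → R := Pi.mulSingle i (-1)
  let A : o → Matrix (Fin 2) (Fin 2) R := Pi.mulSingle i (sqSubCompanion (-1))
  let B : o → Matrix (Fin 2) (Fin 2) R := fun j => sqSubCompanion (s j * r)
  have hdetA : ∏ j, (A j).det = 1 := by
    refine Finset.prod_eq_one fun j _ => ?_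
    obtain rfl | hj := eq_or_ne j i
    · simp [A, det_sqSubCompanion]
    · simp [A, hj]
  have hdetB : ∏ j, (B j).det = 1 :=
    calc
      _ = ∏ j, s j * -r := by simp only [B, det_sqSubCompanion, mul_neg]
      _ = (∏ j, s j) * (-r) ^ Fintype.card o := by
        rw [Finset.prod_mul_distrib, Finset.prod_const, Finset.card_univ]
      _ = 1 := by simp [s, hr]
  have hsq : A ^ 2 * B ^ 2 = r • 1 := by
    funext j
    obtain rfl | hj := eq_or_ne j i
    · simp [A, B, s, sqSubCompanion_sq]
    · simp [A, B, s, sqSubCompanion_sq, hj]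
  refine ⟨specialBlockDiagonal e A hdetA, specialBlockDiagonal e B hdetB, ?_⟩
  rw [Matrix.SpecialLinearGroup.coe_mul, Matrix.SpecialLinearGroup.coe_pow,
    Matrix.SpecialLinearGroup.coe_pow, coe_specialBlockDiagonal, coe_specialBlockDiagonal,
    ← map_pow, ← map_pow, ← map_mul, hsq, map_smul, map_one]

theorem scalar_matrix_product_of_two_squares_general [NoZeroDivisors R] {n : ℕ}
    (hk : Fintype.card k = 2 * n) {r : R} (hr : r ^ (2 * n) = 1) :
    (∃ x y : Matrix.SpecialLinearGroup k R, ((x ^ 2 * y ^ 2 :) : Matrix k k R) = r • 1) ∧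
      ((-r) ^ n = 1 → ∃ x : Matrix.SpecialLinearGroup k R, ((x ^ 2 :) : Matrix k k R) = r • 1) := by
  let e : Fin 2 × Fin n ≃ k := Fintype.equivOfCardEq (by simp [hk])
  have single (h : (-r) ^ n = 1) :
      ∃ x : Matrix.SpecialLinearGroup k R, ((x ^ 2 :) : Matrix k k R) = r • 1 :=
    exists_sq_eq_smul_one e (by rwa [Fintype.card_fin])
  refine ⟨?_, single⟩
  by_cases h : (-r) ^ n = 1
  · obtain ⟨x, hx⟩ := single h
    exact ⟨x, 1, by rwa [one_pow, mul_one]⟩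
  · have hsign : ((-r) ^ n) ^ 2 = 1 := by
      rw [← pow_mul, mul_comm, (even_two_mul n).neg_pow, hr]
    have hneg : (-r) ^ n = -1 := (sq_eq_one_iff.mp hsign).resolve_left h
    have hn : 0 < n := Nat.pos_of_ne_zero fun h0 => h (by rw [h0, pow_zero])
    exact exists_sq_mul_sq_eq_smul_one e ⟨0, hn⟩ (by rwa [Fintype.card_fin])

end ScalarMatrix

/-- Let `F` be a field, `n ≥ 1`, and `r ∈ F` with `r^(2n) = 1`. Then the scalar matrix `r·I_{2n}`
lies in `SL_{2n}(F)` and is a product of two squares there; moreover if `(-r)^n = 1` then it is a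
single square. -/
theorem scalar_matrix_product_of_two_squares {F : Type*} [Field F] (n : ℕ) (hn : 1 ≤ n)
    (r : F) (hr : r ^ (2 * n) = 1) :
    (∃ x y : Matrix.SpecialLinearGroup (Fin (2 * n)) F,
      ((x ^ 2 * y ^ 2 : Matrix.SpecialLinearGroup (Fin (2 * n)) F) :
          Matrix (Fin (2 * n)) (Fin (2 * n)) F) =
        r • (1 : Matrix (Fin (2 * n)) (Fin (2 * n)) F)) ∧
    ((-r) ^ n = 1 → ∃ x : Matrix.SpecialLinearGroup (Fin (2 * n)) F,
      ((x ^ 2 : Matrix.SpecialLinearGroup (Fin (2 * n)) F) :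
          Matrix (Fin (2 * n)) (Fin (2 * n)) F) =
        r • (1 : Matrix (Fin (2 * n)) (Fin (2 * n)) F)) :=
  scalar_matrix_product_of_two_squares_general (Fintype.card_fin _) hr
end
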